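/- arXiv:1102.5774 — 2 statements merged into one kernel-verified Lean document; each statement's English description precedes it below -/
import Mathlib

section
/- Let u ∈ bUSC([0,T]×ℝⁿ) be a viscosity subsolution of ∂ₜu − F(t,x,u,Du,D²u) = 0 on (0,T)×ℝⁿ, where F is continuous, degenerate elliptic, and proper with constant γ ≥ 0 (i.e. γ(r−s) ≤ F(t,x,s,p,X) − F(t,x,r,p,X) for s ≤ r), and F is uniformly continuous in u on compacts. Extend u to t = T by u(T,x) := limsup_{t↑T, y→x} u(t,y). If φ is a C² test function and u − φ has a strict maximum over [0,T]×ℝⁿ at (T, x̄), then ∂ₜφ(T,x̄) − F(T, x̄, u(T,x̄), Dφ(T,x̄), D²φ(T,x̄)) ≤ 0. -/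
open Set Filter

variable {n : ℕ}

/-- Time derivative `∂ₜφ` of a function on `ℝ × ℝⁿ`. -/
noncomputable def ptDeriv (φ : ℝ × EuclideanSpace ℝ (Fin n) → ℝ)
    (p : ℝ × EuclideanSpace ℝ (Fin n)) : ℝ :=
  fderiv ℝ φ p (1, 0)

/-- Spatial gradient `Dφ` of a function on `ℝ × ℝⁿ`. -/
noncomputable def pxGrad (φ : ℝ × EuclideanSpace ℝ (Fin n) → ℝ)
    (p : ℝ × EuclideanSpace ℝ (Fin n)) : EuclideanSpace ℝ (Fin n) :=
  (EuclideanSpace.equiv (Fin n) ℝ).symm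
    (fun i => fderiv ℝ φ p (0, EuclideanSpace.single i 1))

/-- Spatial Hessian `D²φ` of a function on `ℝ × ℝⁿ`, as a matrix. -/
noncomputable def pxHess (φ : ℝ × EuclideanSpace ℝ (Fin n) → ℝ)
    (p : ℝ × EuclideanSpace ℝ (Fin n)) : Matrix (Fin n) (Fin n) ℝ :=
  fun i j => fderiv ℝ (fun q => fderiv ℝ φ q (0, EuclideanSpace.single j 1)) p
    (0, EuclideanSpace.single i 1)

/-!
Since `u - φ` has a strict maximum at `(T, x̄)` and `u (T, x̄)` is a limit of values of `u` at
earlier times, the penalized function `u - φ - ε / (T - t)` has, for small `ε > 0`, an interior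
maximum point `p` with `(p, u p)` as close to `((T, x̄), u (T, x̄))` as desired. The penalty depends
on time only and increases with it, so testing `u` with `φ + ε / (T - t)` at `p` leaves the gradient
and the Hessian of `φ` unchanged and adds `ε / (T - t)² ≥ 0` to the time derivative: the
subsolution inequality for `φ` itself holds at `p`, and it passes to the limit by continuity of `F`.
-/

open scoped Topology

section Maxima

variable {X : Type*} [TopologicalSpace X]

theorem upperSemicontinuousOn_sub_of_continuousOn {f g : X → ℝ} {s : Set X}
    (hf : UpperSemicontinuousOn f s) (hg : ContinuousOn g s) :
    UpperSemicontinuousOn (fun x => f x - g x) s := by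
  simpa only [sub_eq_add_neg] using hf.add (g := fun x => -g x) hg.neg.upperSemicontinuousOn

theorem exists_isMaxOn_of_forall_notMem_le {β : Type*} [LinearOrder β] {f : X → β} {s k : Set X}
    (hk : IsCompact k) (hf : UpperSemicontinuousOn f k) {x₁ : X} (hx₁ : x₁ ∈ k)
    (hle : ∀ x ∈ s, x ∉ k → f x ≤ f x₁) : ∃ x ∈ k, IsMaxOn f s x := by
  obtain ⟨x, hxk, hx⟩ := hf.exists_isMaxOn ⟨x₁, hx₁⟩ hk
  refine ⟨x, hxk, fun y hy => ?_⟩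
  by_cases hyk : y ∈ k
  · exact hx hyk
  · exact (hle y hy hyk).trans (hx hx₁)

theorem exists_lt_forall_le_of_isCompact {β : Type*} [LinearOrder β] [NoMinOrder β] {f : X → β}
    {k : Set X} {b : β} (hk : IsCompact k) (hf : UpperSemicontinuousOn f k)
    (hlt : ∀ x ∈ k, f x < b) : ∃ m < b, ∀ x ∈ k, f x ≤ m := by
  rcases k.eq_empty_or_nonempty with rfl | hne
  · obtain ⟨m, hm⟩ := exists_lt b
    exact ⟨m, hm, by simp⟩
  · obtain ⟨x, hxk, hx⟩ := hf.exists_isMaxOn hne hk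
    exact ⟨f x, hlt x hxk, fun y hy => hx hy⟩

variable {K A : Set X} {P : X} {v h : X → ℝ} {W : Set (X × ℝ)}

theorem exists_lt_forall_mem_of_strict_max (hK : IsCompact K) (hv : UpperSemicontinuousOn v K)
    (hmax : ∀ p ∈ K, p ≠ P → v p < v P) (hW : W ∈ 𝓝 (P, v P)) :
    ∃ m < v P, ∀ p ∈ K, m < v p → (p, v p) ∈ W := by
  obtain ⟨U, V, hUo, hPU, hVo, hPV, hUV⟩ := mem_nhds_prod_iff'.1 hW
  obtain ⟨a, ha, haV⟩ := exists_Ioc_subset_of_mem_nhds (hVo.mem_nhds hPV) (exists_lt _)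
  obtain ⟨b, hb, hbU⟩ := exists_lt_forall_le_of_isCompact (hK.diff hUo) (hv.mono sdiff_subset)
    fun p hp => hmax p hp.1 fun h => hp.2 (h ▸ hPU)
  refine ⟨max a b, max_lt ha hb, fun p hp hm => hUV ⟨?_, haV ⟨(le_max_left a b).trans_lt hm, ?_⟩⟩⟩
  · by_contra hpU
    exact (hbU p ⟨hp, hpU⟩).not_gt ((le_max_right a b).trans_lt hm)
  · rcases eq_or_ne p P with rfl | hne
    · exact le_rfl
    · exact (hmax p hp hne).le

theorem exists_isMaxOn_sub_mul_of_isCompact_sublevel (hv : UpperSemicontinuousOn v A) {b : ℝ}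
    (hvb : ∀ p ∈ A, v p ≤ b) (hh : ContinuousOn h A)
    (hproper : ∀ c, IsCompact {p ∈ A | h p ≤ c}) (hne : A.Nonempty) {ε : ℝ} (hε : 0 < ε) :
    ∃ p ∈ A, IsMaxOn (fun q => v q - ε * h q) A p := by
  obtain ⟨p₁, hp₁⟩ := hne
  set f : X → ℝ := fun q => v q - ε * h q
  have husc : UpperSemicontinuousOn f A :=
    upperSemicontinuousOn_sub_of_continuousOn hv (hh.const_mul ε)
  have hlevel : ∀ p ∈ A, f p₁ ≤ f p → h p ≤ (b - f p₁) / ε := fun p hp hle => by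
    rw [le_div_iff₀' hε]
    linarith [hvb p hp, show f p = v p - ε * h p from rfl]
  obtain ⟨p, hp, hmax⟩ := exists_isMaxOn_of_forall_notMem_le (f := f) (s := A)
    (hproper ((b - f p₁) / ε)) (husc.mono (sep_subset _ _)) ⟨hp₁, hlevel p₁ hp₁ le_rfl⟩
    fun p hp hpk => le_of_not_ge fun hle => hpk ⟨hp, hlevel p hp hle⟩
  exact ⟨p, hp.1, hmax⟩

theorem exists_isMaxOn_sub_mul_of_strict_max (hK : IsCompact K) (hv : UpperSemicontinuousOn v K)
    (hmax : ∀ p ∈ K, p ≠ P → v p < v P) (hAK : A ⊆ K) (hA : ∀ m < v P, ∃ p ∈ A, m < v p)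
    (hh : ContinuousOn h A) (hh₀ : ∀ p ∈ A, 0 ≤ h p)
    (hproper : ∀ c, IsCompact {p ∈ A | h p ≤ c}) (hW : W ∈ 𝓝 (P, v P)) :
    ∃ ε > 0, ∃ p ∈ A, (p, v p) ∈ W ∧ IsMaxOn (fun q => v q - ε * h q) A p := by
  obtain ⟨m, hm, hmW⟩ := exists_lt_forall_mem_of_strict_max hK hv hmax hW
  obtain ⟨p₁, hp₁, hmp₁⟩ := hA m hm
  obtain ⟨ε, hε, hεm⟩ : ∃ ε > 0, h p₁ * ε < v p₁ - m :=
    exists_pos_mul_lt (sub_pos.2 hmp₁) (h p₁)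
  have hvP : ∀ p ∈ A, v p ≤ v P := fun p hp => by
    rcases eq_or_ne p P with rfl | hne
    · exact le_rfl
    · exact (hmax p (hAK hp) hne).le
  obtain ⟨p, hp, hpmax⟩ := exists_isMaxOn_sub_mul_of_isCompact_sublevel (hv.mono hAK) hvP hh
    hproper ⟨p₁, hp₁⟩ hε
  refine ⟨ε, hε, p, hp, hmW p (hAK hp) ?_, hpmax⟩
  calc m < v p₁ - ε * h p₁ := by rwa [lt_sub_comm, mul_comm]
    _ ≤ v p - ε * h p := hpmax hp₁
    _ ≤ v p := sub_le_self _ (mul_nonneg hε.le (hh₀ p hp))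

theorem isCompact_setOf_pos_and_inv_le {s : X → ℝ} (hK : IsCompact K) (hs : Continuous s)
    (c : ℝ) : IsCompact {p ∈ K ∩ {p | 0 < s p} | (s p)⁻¹ ≤ c} := by
  have hclosed : IsClosed ({p | 0 ≤ s p} ∩ {p | 1 ≤ c * s p}) :=
    (isClosed_le continuous_const hs).inter (isClosed_le continuous_const (hs.const_mul c))
  convert hK.inter_right hclosed using 1
  ext p
  constructor
  · rintro ⟨⟨hpK, hpos⟩, hle⟩
    exact ⟨hpK, mem_ofPred.2 hpos.le, (inv_le_iff_one_le_mul₀ hpos).1 hle⟩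
  · rintro ⟨hpK, hnonneg, hle⟩
    have hpos : 0 < s p := lt_of_le_of_ne hnonneg fun h => by
      have : (1 : ℝ) ≤ c * s p := hle
      rw [← h, mul_zero] at this
      exact absurd this one_pos.not_ge
    exact ⟨⟨hpK, hpos⟩, (inv_le_iff_one_le_mul₀ hpos).2 hle⟩

theorem exists_isLocalMax_sub_inv_of_strict_max [LocallyCompactSpace X] {τ : X → ℝ} {T : ℝ}
    {S : Set X} (hτ : Continuous τ) (hS : S ∈ 𝓝 P)
    (hv : UpperSemicontinuousOn v (S ∩ {p | τ p ≤ T}))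
    (hmax : ∀ p ∈ S, τ p ≤ T → p ≠ P → v p < v P)
    (hleft : ∀ m < v P, ∃ᶠ p in 𝓝[{p | τ p < T}] P, m < v p) (hW : W ∈ 𝓝 (P, v P)) :
    ∃ ε > 0, ∃ p, τ p < T ∧ p ∈ S ∧ (p, v p) ∈ W ∧
      IsLocalMax (fun q => v q - ε * (T - τ q)⁻¹) p := by
  obtain ⟨B, hBP, hBS, hB⟩ := local_compact_nhds hS
  have hs : Continuous fun p => T - τ p := continuous_const.sub hτ
  have hWB : W ∩ Prod.fst ⁻¹' interior B ∈ 𝓝 (P, v P) :=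
    inter_mem hW (continuousAt_fst.preimage_mem_nhds (interior_mem_nhds.2 hBP))
  obtain ⟨ε, hε, p, ⟨hpB, hpT⟩, ⟨hpW, hpint⟩, hpmax⟩ := exists_isMaxOn_sub_mul_of_strict_max
    (A := B ∩ {p | 0 < T - τ p}) (h := fun p => (T - τ p)⁻¹)
    (hB.inter_right (isClosed_le hτ continuous_const))
    (hv.mono (inter_subset_inter_left _ hBS)) (fun p hp => hmax p (hBS hp.1) hp.2)
    (fun p hp => ⟨hp.1, mem_ofPred.2 (sub_pos.1 hp.2).le⟩)
    (fun m hm => by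
      obtain ⟨p, hmp, hpB, hp⟩ := ((hleft m hm).and_eventually
        (inter_mem (mem_nhdsWithin_of_mem_nhds hBP) self_mem_nhdsWithin)).exists
      exact ⟨p, ⟨hpB, mem_ofPred.2 (sub_pos.2 hp)⟩, hmp⟩)
    (hs.continuousOn.inv₀ fun p hp => ne_of_gt hp.2)
    (fun p hp => inv_nonneg.2 (le_of_lt hp.2)) (isCompact_setOf_pos_and_inv_le hB hs) hWB
  have hA : B ∩ {p | 0 < T - τ p} ∈ 𝓝 p := inter_mem (mem_interior_iff_mem_nhds.1 hpint)
    (hs.continuousAt.eventually_const_lt hpT)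
  exact ⟨ε, hε, p, sub_pos.1 hpT, hBS hpB, hpW, hpmax.isLocalMax hA⟩

theorem frequently_lt_sub_of_continuousAt {l : Filter X} {u φ : X → ℝ} (hl : l ≤ 𝓝 P)
    (hu : ∀ a < u P, ∃ᶠ p in l, a < u p) (hφ : ContinuousAt φ P) {m : ℝ} (hm : m < u P - φ P) :
    ∃ᶠ p in l, m < u p - φ p := by
  obtain ⟨b, hφb, hbu⟩ := exists_between (show φ P < u P - m by linarith)
  refine ((hu (m + b) (by linarith)).and_eventually
    (hl (hφ.eventually_lt_const hφb))).mono fun p hp => ?_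
  linarith [hp.1, hp.2]

end Maxima

theorem nhdsWithin_Ico_prod_univ_neBot {α Y : Type*} [TopologicalSpace α] [LinearOrder α]
    [OrderTopology α] [DenselyOrdered α] [TopologicalSpace Y] {a b : α} (hab : a < b) (y : Y) :
    (𝓝[Ico a b ×ˢ univ] (b, y)).NeBot := by
  have := right_nhdsWithin_Ico_neBot hab
  rw [nhdsWithin_prod_eq, nhdsWithin_univ]
  infer_instance

theorem exists_contDiff_eventuallyEq {E G : Type*} [NormedAddCommGroup E] [NormedSpace ℝ E]
    [HasContDiffBump E] [NormedAddCommGroup G] [NormedSpace ℝ G] {k : ℕ} {f : E → G} {x : E}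
    (hf : ContDiffAt ℝ k f x) : ∃ g : E → G, ContDiff ℝ k g ∧ g =ᶠ[𝓝 x] f := by
  obtain ⟨r, hr, hball⟩ :=
    Metric.nhds_basis_closedBall.eventually_iff.1 (hf.eventually (by simp))
  let χ : ContDiffBump x := ⟨r / 2, r, half_pos hr, half_lt_self hr⟩
  refine ⟨fun y => χ y • f y, contDiff_iff_contDiffAt.2 fun y => ?_,
    χ.eventuallyEq_one.mono fun y hy => by simp [hy]⟩
  by_cases hy : y ∈ tsupport χ
  · exact χ.contDiffAt.smul (hball (χ.tsupport_eq ▸ hy))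
  · refine (contDiffAt_const (c := (0 : G))).congr_of_eventuallyEq ?_
    exact (notMem_tsupport_iff_eventuallyEq.1 hy).mono fun z hz => by simp [hz]

theorem hasDerivAt_mul_inv_const_sub (ε : ℝ) {T t : ℝ} (ht : t ≠ T) :
    HasDerivAt (fun s => ε * (T - s)⁻¹) (ε / (T - t) ^ 2) t := by
  simpa [div_eq_mul_inv] using
    (((hasDerivAt_id t).const_sub T).fun_inv (sub_ne_zero.2 ht.symm)).const_mul ε

section Parabolic

variable {F : ℝ → EuclideanSpace ℝ (Fin n) → ℝ → EuclideanSpace ℝ (Fin n) →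
    Matrix (Fin n) (Fin n) ℝ → ℝ} {u φ : ℝ × EuclideanSpace ℝ (Fin n) → ℝ}

/-- The value of `∂ₜφ - F(t, x, r, Dφ, D²φ)` at the space-time point `p = (t, x)`. The zeroth-order
argument `r` is separate from `φ`, because in the viscosity inequality it is the value of the
subsolution and not that of the test function. -/
noncomputable def parabolicResidual (F : ℝ → EuclideanSpace ℝ (Fin n) → ℝ →
      EuclideanSpace ℝ (Fin n) → Matrix (Fin n) (Fin n) ℝ → ℝ)
    (φ : ℝ × EuclideanSpace ℝ (Fin n) → ℝ) (p : ℝ × EuclideanSpace ℝ (Fin n)) (r : ℝ) : ℝ :=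
  ptDeriv φ p - F p.1 p.2 r (pxGrad φ p) (pxHess φ p)

/-- `u` satisfies the viscosity subsolution inequality of `∂ₜu - F(t, x, u, Du, D²u) = 0` on the
space-time set `Ω`. No semicontinuity is included, and test functions are `C²` on the whole
space. -/
def IsViscositySubsolutionOn (F : ℝ → EuclideanSpace ℝ (Fin n) → ℝ →
      EuclideanSpace ℝ (Fin n) → Matrix (Fin n) (Fin n) ℝ → ℝ)
    (u : ℝ × EuclideanSpace ℝ (Fin n) → ℝ) (Ω : Set (ℝ × EuclideanSpace ℝ (Fin n))) : Prop :=
  ∀ ψ : ℝ × EuclideanSpace ℝ (Fin n) → ℝ, ContDiff ℝ 2 ψ → ∀ p ∈ Ω,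
    IsLocalMaxOn (fun q => u q - ψ q) Ω p → parabolicResidual F ψ p (u p) ≤ 0

theorem continuous_ptDeriv (hφ : ContDiff ℝ 1 φ) : Continuous (ptDeriv φ) :=
  (hφ.continuous_fderiv one_ne_zero).clm_apply continuous_const

theorem continuous_pxGrad (hφ : ContDiff ℝ 1 φ) : Continuous (pxGrad φ) :=
  (EuclideanSpace.equiv (Fin n) ℝ).symm.continuous.comp <| continuous_pi fun _ =>
    (hφ.continuous_fderiv one_ne_zero).clm_apply continuous_const

theorem continuous_pxHess (hφ : ContDiff ℝ 2 φ) : Continuous (pxHess φ) :=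
  continuous_pi fun _ => continuous_pi fun _ =>
    (((hφ.fderiv_right (m := 1) (by norm_num)).clm_apply contDiff_const).continuous_fderiv
      one_ne_zero).clm_apply continuous_const

theorem continuous_parabolicResidual
    (hF : Continuous (fun q : ℝ × EuclideanSpace ℝ (Fin n) × ℝ ×
      EuclideanSpace ℝ (Fin n) × Matrix (Fin n) (Fin n) ℝ =>
        F q.1 q.2.1 q.2.2.1 q.2.2.2.1 q.2.2.2.2))
    (hφ : ContDiff ℝ 2 φ) :
    Continuous fun z : (ℝ × EuclideanSpace ℝ (Fin n)) × ℝ => parabolicResidual F φ z.1 z.2 := by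
  have ht := continuous_ptDeriv (hφ.of_le one_le_two)
  have hx := continuous_pxGrad (hφ.of_le one_le_two)
  have hxx := continuous_pxHess hφ
  have hjet : Continuous fun z : (ℝ × EuclideanSpace ℝ (Fin n)) × ℝ =>
      (z.1.1, z.1.2, z.2, pxGrad φ z.1, pxHess φ z.1) := by fun_prop
  exact (ht.comp continuous_fst).sub (hF.comp hjet)

theorem fderiv_add_comp_fst {E : Type*} [NormedAddCommGroup E] [NormedSpace ℝ E]
    {f : ℝ × E → ℝ} {η : ℝ → ℝ} {p : ℝ × E} (hf : DifferentiableAt ℝ f p)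
    (hη : DifferentiableAt ℝ η p.1) (v : ℝ × E) :
    fderiv ℝ (fun q => f q + η q.1) p v = fderiv ℝ f p v + deriv η p.1 * v.1 := by
  have hfst : HasFDerivAt (fun q : ℝ × E => η q.1)
      (deriv η p.1 • ContinuousLinearMap.fst ℝ ℝ E) p :=
    hη.hasDerivAt.comp_hasFDerivAt p hasFDerivAt_fst
  simp [(hf.hasFDerivAt.fun_add hfst).fderiv]

theorem parabolicResidual_add_comp_fst {η : ℝ → ℝ} (hφ : Differentiable ℝ φ)
    (hη : Differentiable ℝ η) (p : ℝ × EuclideanSpace ℝ (Fin n)) (r : ℝ) :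
    parabolicResidual F (fun q => φ q + η q.1) p r = parabolicResidual F φ p r + deriv η p.1 := by
  have hfderiv := fun q v => fderiv_add_comp_fst (hφ q) (hη q.1) v
  have ht : ptDeriv (fun q => φ q + η q.1) p = ptDeriv φ p + deriv η p.1 := by
    simp [ptDeriv, hfderiv]
  have hx : pxGrad (fun q => φ q + η q.1) p = pxGrad φ p := by
    simp [pxGrad, hfderiv]
  have hxx : pxHess (fun q => φ q + η q.1) p = pxHess φ p := by
    ext i j
    simp only [pxHess, hfderiv, mul_zero, add_zero]
  rw [parabolicResidual, parabolicResidual, ht, hx, hxx]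
  ring

theorem IsViscositySubsolutionOn.parabolicResidual_add_deriv_le
    {Ω : Set (ℝ × EuclideanSpace ℝ (Fin n))} (hsub : IsViscositySubsolutionOn F u Ω)
    (hφ : ContDiff ℝ 2 φ) {p : ℝ × EuclideanSpace ℝ (Fin n)} (hp : p ∈ Ω) {η : ℝ → ℝ}
    (hη : ContDiffAt ℝ 2 η p.1)
    (hmax : IsLocalMaxOn (fun q => u q - φ q - η q.1) Ω p) :
    parabolicResidual F φ p (u p) + deriv η p.1 ≤ 0 := by
  obtain ⟨ζ, hζ, hζη⟩ := exists_contDiff_eventuallyEq hη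
  have hnear : (fun q => u q - φ q - η q.1) =ᶠ[𝓝 p] fun q => u q - (φ q + ζ q.1) :=
    (continuousAt_fst.eventually hζη).mono fun q hq => by simp only [hq, sub_sub]
  rw [← hζη.deriv_eq, ← parabolicResidual_add_comp_fst (hφ.differentiable two_ne_zero)
    (hζ.differentiable two_ne_zero)]
  exact hsub _ (hφ.add (hζ.comp contDiff_fst)) p hp
    (hmax.congr (hnear.filter_mono nhdsWithin_le_nhds) hp)

theorem IsViscositySubsolutionOn.parabolicResidual_nonpos_of_isLocalMaxOn_sub_inv
    {Ω : Set (ℝ × EuclideanSpace ℝ (Fin n))} (hsub : IsViscositySubsolutionOn F u Ω)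
    (hφ : ContDiff ℝ 2 φ) {p : ℝ × EuclideanSpace ℝ (Fin n)} (hp : p ∈ Ω) {T ε : ℝ}
    (hpT : p.1 ≠ T) (hε : 0 ≤ ε)
    (hmax : IsLocalMaxOn (fun q => u q - φ q - ε * (T - q.1)⁻¹) Ω p) :
    parabolicResidual F φ p (u p) ≤ 0 := by
  have hη : ContDiffAt ℝ 2 (fun t => ε * (T - t)⁻¹) p.1 :=
    contDiffAt_const.mul ((contDiffAt_const.sub contDiffAt_id).inv (sub_ne_zero.2 hpT.symm))
  have hle := hsub.parabolicResidual_add_deriv_le hφ hp hη hmax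
  rw [(hasDerivAt_mul_inv_const_sub ε hpT).deriv] at hle
  have : 0 ≤ ε / (T - p.1) ^ 2 := by positivity
  linarith

theorem IsViscositySubsolutionOn.frequently_parabolicResidual_nonpos {T : ℝ} (hT : 0 < T)
    (hsub : IsViscositySubsolutionOn F u (Ioo 0 T ×ˢ univ))
    (husc : UpperSemicontinuousOn u (Icc 0 T ×ˢ univ)) (hφ : ContDiff ℝ 2 φ)
    {xbar : EuclideanSpace ℝ (Fin n)}
    (hleft : ∀ a < u (T, xbar), ∃ᶠ p in 𝓝[Ico 0 T ×ˢ univ] (T, xbar), a < u p)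
    (hmax : ∀ᶠ p in 𝓝[Icc 0 T ×ˢ univ] (T, xbar),
      p ≠ (T, xbar) → u p - φ p < u (T, xbar) - φ (T, xbar)) :
    ∃ᶠ z in 𝓝 ((T, xbar), u (T, xbar)), parabolicResidual F φ z.1 z.2 ≤ 0 := by
  set P : ℝ × EuclideanSpace ℝ (Fin n) := (T, xbar)
  have hpos : ∀ᶠ p in 𝓝 P, 0 < p.1 := continuousAt_fst.eventually_const_lt hT
  have hbefore : Ico 0 T ×ˢ univ ⊆ {p : ℝ × EuclideanSpace ℝ (Fin n) | p.1 < T} :=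
    fun p hp => hp.1.2
  refine frequently_iff.2 fun {W} hW => ?_
  let shift : (ℝ × EuclideanSpace ℝ (Fin n)) × ℝ → (ℝ × EuclideanSpace ℝ (Fin n)) × ℝ :=
    fun z => (z.1, z.2 + φ z.1)
  have hshift : Continuous shift :=
    continuous_fst.prodMk (continuous_snd.add (hφ.continuous.comp continuous_fst))
  have hW' : shift ⁻¹' W ∈ 𝓝 (P, u P - φ P) :=
    hshift.continuousAt.preimage_mem_nhds (by simpa only [shift, sub_add_cancel] using hW)
  obtain ⟨ε, hε, p, hpT, ⟨hp₀, -⟩, hpW, hpmax⟩ := exists_isLocalMax_sub_inv_of_strict_max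
    continuous_fst (hpos.and (eventually_nhdsWithin_iff.1 hmax))
    (upperSemicontinuousOn_sub_of_continuousOn
      (husc.mono fun p hp => ⟨⟨hp.1.1.le, hp.2⟩, mem_univ _⟩) hφ.continuous.continuousOn)
    (fun p hp hpT => hp.2 ⟨⟨hp.1.le, hpT⟩, mem_univ _⟩)
    (fun m hm => (frequently_lt_sub_of_continuousAt nhdsWithin_le_nhds hleft
      hφ.continuous.continuousAt hm).filter_mono (nhdsWithin_mono P hbefore)) hW'
  refine ⟨(p, u p), by simpa only [shift, mem_preimage, sub_add_cancel] using hpW, ?_⟩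
  exact hsub.parabolicResidual_nonpos_of_isLocalMaxOn_sub_inv hφ ⟨⟨hp₀, hpT⟩, mem_univ _⟩ hpT.ne
    hε.le (hpmax.on _)

theorem stmt9_general {T : ℝ} (hT : 0 < T)
    (hF : Continuous (fun q : ℝ × EuclideanSpace ℝ (Fin n) × ℝ ×
      EuclideanSpace ℝ (Fin n) × Matrix (Fin n) (Fin n) ℝ =>
        F q.1 q.2.1 q.2.2.1 q.2.2.2.1 q.2.2.2.2))
    (husc : UpperSemicontinuousOn u (Icc 0 T ×ˢ univ))
    (hsub : IsViscositySubsolutionOn F u (Ioo 0 T ×ˢ univ)) (hφ : ContDiff ℝ 2 φ)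
    {xbar : EuclideanSpace ℝ (Fin n)}
    (hleft : ∀ a < u (T, xbar), ∃ᶠ p in 𝓝[Ico 0 T ×ˢ univ] (T, xbar), a < u p)
    (hmax : ∀ᶠ p in 𝓝[Icc 0 T ×ˢ univ] (T, xbar),
      p ≠ (T, xbar) → u p - φ p < u (T, xbar) - φ (T, xbar)) :
    parabolicResidual F φ (T, xbar) (u (T, xbar)) ≤ 0 :=
  (isClosed_le (continuous_parabolicResidual hF hφ) continuous_const).closure_subset
    (hsub.frequently_parabolicResidual_nonpos hT husc hφ hleft hmax).mem_closure

end Parabolic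

/-- If `u` is a bounded USC viscosity subsolution of
`∂ₜu - F(t,x,u,Du,D²u) = 0` on `(0,T)×ℝⁿ` (with `F` continuous, degenerate elliptic,
proper with constant `γ ≥ 0`, uniformly continuous in `u` on bounded sets), extended
to `t = T` by the USC envelope, and `u - φ` has a strict maximum over `[0,T]×ℝⁿ` at
`(T,x̄)` for a `C²` test function `φ`, then the subsolution inequality holds at `(T,x̄)`. -/
theorem stmt9 (T : ℝ) (hT : 0 < T)
    (F : ℝ → EuclideanSpace ℝ (Fin n) → ℝ → EuclideanSpace ℝ (Fin n) →
      Matrix (Fin n) (Fin n) ℝ → ℝ)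
    (hFcont : Continuous (fun q : ℝ × EuclideanSpace ℝ (Fin n) × ℝ ×
      EuclideanSpace ℝ (Fin n) × Matrix (Fin n) (Fin n) ℝ =>
        F q.1 q.2.1 q.2.2.1 q.2.2.2.1 q.2.2.2.2))
    (hFell : ∀ t x r p (X Y : Matrix (Fin n) (Fin n) ℝ), (Y - X).PosSemidef →
      F t x r p X ≤ F t x r p Y)
    (γ : ℝ) (hγ : 0 ≤ γ)
    (hFproper : ∀ t x p X r s, s ≤ r → γ * (r - s) ≤ F t x s p X - F t x r p X)
    (hFuc : ∀ R > (0:ℝ), ∀ δ > (0:ℝ), ∃ η > (0:ℝ), ∀ t x p X r s,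
      |r| ≤ R → |s| ≤ R → ‖p‖ ≤ R → (∀ i j, |X i j| ≤ R) → |r - s| < η →
      |F t x r p X - F t x s p X| < δ)
    (u : ℝ × EuclideanSpace ℝ (Fin n) → ℝ)
    (hub : ∃ C, ∀ p, |u p| ≤ C)
    (husc : UpperSemicontinuousOn u (Set.Icc 0 T ×ˢ Set.univ))
    (henv : ∀ x, u (T, x) = limsup u (nhdsWithin (T, x) (Set.Ico 0 T ×ˢ Set.univ)))
    (hsub : ∀ ψ : ℝ × EuclideanSpace ℝ (Fin n) → ℝ, ContDiff ℝ 2 ψ →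
      ∀ t₀ ∈ Set.Ioo 0 T, ∀ x₀,
      IsLocalMaxOn (fun p => u p - ψ p) (Set.Ioo 0 T ×ˢ Set.univ) (t₀, x₀) →
      ptDeriv ψ (t₀, x₀) - F t₀ x₀ (u (t₀, x₀)) (pxGrad ψ (t₀, x₀)) (pxHess ψ (t₀, x₀)) ≤ 0)
    (φ : ℝ × EuclideanSpace ℝ (Fin n) → ℝ) (hφ : ContDiff ℝ 2 φ)
    (xbar : EuclideanSpace ℝ (Fin n))
    (hstrict : ∀ p ∈ Set.Icc 0 T ×ˢ (Set.univ : Set (EuclideanSpace ℝ (Fin n))),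
      p ≠ (T, xbar) → u p - φ p < u (T, xbar) - φ (T, xbar)) :
    ptDeriv φ (T, xbar) -
      F T xbar (u (T, xbar)) (pxGrad φ (T, xbar)) (pxHess φ (T, xbar)) ≤ 0 := by
  obtain ⟨C, hC⟩ := hub
  have := nhdsWithin_Ico_prod_univ_neBot hT xbar
  exact stmt9_general hT hFcont husc (fun ψ hψ p hp => hsub ψ hψ p.1 hp.1 p.2) hφ
    (fun a ha => frequently_lt_of_lt_limsup
      (isCoboundedUnder_le_of_le _ fun p => (abs_le.1 (hC p)).1) (henv xbar ▸ ha))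
    (eventually_mem_nhdsWithin.mono hstrict)
end

section
/- Assume F : [0,T]×ℝⁿ×ℝ×ℝⁿ×Sⁿ → ℝ is proper with γ > 0 and satisfies the structural condition F(t,x,r,α(x−x̃),X) − F(t,x̃,r,α(x−x̃),Y) ≤ θ_R(α|x−x̃|²+|x−x̃|) whenever |r| ≤ R and (X,Y) satisfy the Crandall–Ishii matrix inequality, together with uniform continuity of F on sets where u,p,X are bounded. Let u ∈ bUSC, v ∈ bLSC on [0,T]×ℝⁿ be sub- /supersolutions of ∂ₜ − F = 0 on (0,T]×ℝⁿ with u(0,·), v(0,·) ∈ BUC(ℝⁿ) and u(0,·) ≤ v(0,·). Then for all (t,x,y) ∈ [0,T]×ℝⁿ×ℝⁿ: u(t,x) − v(t,y) ≤ inf_{α>0} [(α/2)|x−y|² + l(α)], where l(α) → 0 as α → ∞. -/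
open Set Filter Matrix

variable {n : ℕ}

/-
Doubling of variables. Let `M(a)` be the supremum of `u(t, x) - v(t, y) - a/2 |x - y|²`. It is
nonincreasing in `a`, and once `lim M ≤ 0` is known, `l = max 0 M` is the required function.
Suppose `M > μ > 0`. Since `M(a/2) - M(a) → 0`, for large `a` every almost-maximizer has
`a |x - y|²` small, and then `t > 0` because of the initial condition. The Crandall–Ishii theorem on
sums, applied to `u - v` in the variables `(t, x), (s, y)` with an additional penalty on `t - s` and
a small localization, provides matrices `X, Y` satisfying the matrix inequality at which the two
equations can be subtracted. Properness bounds the resulting difference of values of `F` below by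
`γ μ`, up to errors, while the structural condition bounds it above by `θ(a |x - y|² + |x - y|)`.

The theorem on sums comes from sup-convolutions: these are semiconvex, and Alexandrov's theorem and
Jensen's lemma supply points of twice differentiability near a strict maximum.
-/

open scoped Topology

section SemiSubgradient

/-- `q` is a semi-subgradient of `f` at `y` with constant `C`: the concave paraboloid of opening `C`
and slope `q` touches `f` from below at `y`. A function with a semi-subgradient at every point is
semiconvex, and this is the form in which semiconvexity is used. -/
def IsSemiSubgradient {E : Type*} [NormedAddCommGroup E] [NormedSpace ℝ E] (C : ℝ) (f : E → ℝ)
    (y : E) (q : E →L[ℝ] ℝ) : Prop :=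
  ∀ z, f y + q (z - y) - C / 2 * ‖z - y‖ ^ 2 ≤ f z

/-- `f` has a second-order Taylor expansion at `x` with gradient `P` and Hessian `S`, without being
assumed differentiable near `x`. -/
def HasQuadExpansionAt {E : Type*} [NormedAddCommGroup E] [NormedSpace ℝ E] (f : E → ℝ) (x : E)
    (P : E →L[ℝ] ℝ) (S : E →L[ℝ] E →L[ℝ] ℝ) : Prop :=
  (fun h => f (x + h) - f x - P h - 1 / 2 * S h h) =o[𝓝 0] fun h => ‖h‖ ^ 2

lemma abs_sub_le_of_sub_le_abs_add_sq {φ : ℝ → ℝ} {k K : ℝ}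
    (hφ : ∀ s ∈ Icc (0 : ℝ) 1, ∀ t ∈ Icc (0 : ℝ) 1, φ s - φ t ≤ k * |s - t| + K * (s - t) ^ 2) :
    |φ 0 - φ 1| ≤ k := by
  have dist_le : ∀ s ∈ Icc (0 : ℝ) 1, ∀ t ∈ Icc (0 : ℝ) 1,
      dist (φ s) (φ t) ≤ k * |s - t| + K * (s - t) ^ 2 := fun s hs t ht => by
    have hts := hφ t ht s hs
    rw [abs_sub_comm, sub_sq_comm] at hts
    exact abs_sub_le_iff.2 ⟨hφ s hs t ht, hts⟩
  have telescope : ∀ N : ℕ, 0 < N → |φ 0 - φ 1| ≤ k + K * (1 / (N : ℝ)) := fun N hN => by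
    have hN₀ : (0 : ℝ) < N := by exact_mod_cast hN
    have mem : ∀ i ≤ N, (i : ℝ) / N ∈ Icc (0 : ℝ) 1 := fun i hi =>
      ⟨by positivity, (div_le_one hN₀).2 (by exact_mod_cast hi)⟩
    have increment : ∀ {i : ℕ}, i < N →
        dist (φ (i / N)) (φ ((i + 1 : ℕ) / N)) ≤ k * (1 / N) + K * (1 / N) ^ 2 := fun {i} hi => by
      have hsub : ((i : ℝ) / N) - ((i + 1 : ℕ) : ℝ) / N = -(1 / N) := by push_cast; ring
      have := dist_le _ (mem i hi.le) _ (mem (i + 1) hi)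
      rwa [hsub, abs_neg, neg_sq, abs_of_pos (by positivity)] at this
    have := dist_le_range_sum_of_dist_le (f := fun i : ℕ => φ (i / N)) N increment
    simp only [Nat.cast_zero, zero_div, div_self hN₀.ne', Finset.sum_const, Finset.card_range,
      nsmul_eq_mul] at this
    refine this.trans_eq ?_
    field_simp
  have lim : Tendsto (fun N : ℕ => k + K * (1 / (N : ℝ))) atTop (𝓝 (k + K * 0)) :=
    (tendsto_one_div_atTop_nhds_zero_nat.const_mul K).const_add k
  rw [mul_zero, add_zero] at lim
  exact ge_of_tendsto lim ((eventually_gt_atTop 0).mono telescope)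

lemma convexOn_univ_of_forall_exists_subgradient {E : Type*} [AddCommGroup E] [Module ℝ E]
    {f : E → ℝ} (hf : ∀ m, ∃ q : E →ₗ[ℝ] ℝ, ∀ z, f m + q (z - m) ≤ f z) : ConvexOn ℝ univ f := by
  refine ⟨convex_univ, fun x _ y _ a b ha hb hab => ?_⟩
  obtain ⟨q, hq⟩ := hf (a • x + b • y)
  have hx := mul_le_mul_of_nonneg_left (hq x) ha
  have hy := mul_le_mul_of_nonneg_left (hq y) hb
  obtain rfl : b = 1 - a := by linarith
  simp only [map_sub, map_add, map_smul, smul_eq_mul] at hx hy ⊢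
  linarith

lemma surjective_of_forall_exists_norm_sub_le {E F : Type*} [NormedAddCommGroup E]
    [NormedSpace ℝ E] [NormedAddCommGroup F] [NormedSpace ℝ F] [FiniteDimensional ℝ F]
    {L : E →L[ℝ] F} (hL : ∀ d, ∃ w, ‖d - L w‖ ≤ 1 / 2 * ‖d‖) : Function.Surjective L := by
  rw [← ContinuousLinearMap.coe_coe, ← LinearMap.range_eq_top]
  by_contra hne
  obtain ⟨d, hd, hfar⟩ := riesz_lemma (Submodule.closed_of_finiteDimensional _)
    (SetLike.exists_not_mem_of_ne_top _ hne rfl) (show (3 / 4 : ℝ) < 1 by norm_num)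
  obtain ⟨w, hw⟩ := hL d
  have := hfar (L w) ⟨w, rfl⟩
  exact hd (norm_le_zero_iff.1 (by linarith) ▸ Submodule.zero_mem _)

lemma exists_forall_le_add_of_le_sub_sq {E : Type*} [NormedAddCommGroup E] [NormedSpace ℝ E]
    [FiniteDimensional ℝ E] {g : E → ℝ} (hg : Continuous g) {B c : ℝ} (hc : 0 < c) {z₀ : E}
    (hB : ∀ z, g z ≤ B - c * ‖z - z₀‖ ^ 2) (p : E →L[ℝ] ℝ) :
    ∃ y, ∀ z, g z ≤ g y + p (z - y) := by
  have norm_tendsto : Tendsto (fun z => ‖z - z₀‖) (cocompact E) atTop := by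
    exact (tendsto_dist_left_cocompact_atTop z₀).congr fun z => dist_eq_norm_sub' z₀ z
  have coercive : Tendsto (fun s : ℝ => s * (c * s - ‖p‖)) atTop atTop :=
    tendsto_id.atTop_mul_atTop₀
      (tendsto_atTop_add_const_right _ _ (tendsto_id.const_mul_atTop hc))
  have far : ∀ᶠ z in cocompact E, g z - p z ≤ g z₀ - p z₀ := by
    filter_upwards [(coercive.comp norm_tendsto).eventually_ge_atTop (B - g z₀)] with z hz
    have hpz := (le_abs_self _).trans (p.le_opNorm (-(z - z₀)))
    simp only [map_neg, map_sub, norm_neg] at hpz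
    have := hB z
    simp only [Function.comp_apply] at hz
    linarith
  obtain ⟨y, hy⟩ := (hg.sub p.continuous).exists_forall_ge' z₀ far
  refine ⟨y, fun z => ?_⟩
  have : g z - p z ≤ g y - p y := hy z
  rw [map_sub]
  linarith

lemma exists_differentiableAt_of_ball_subset_image {E F : Type*} [NormedAddCommGroup E]
    [NormedSpace ℝ E] [FiniteDimensional ℝ E] [NormedAddCommGroup F]
    [NormedSpace ℝ F] [FiniteDimensional ℝ F] {J : E → F} {G : E → E} {K K' : NNReal}
    (hJ : LipschitzWith K J) (hG : LipschitzWith K' G) {S : Set E} {x : E} {r : ℝ} (hr : 0 < r)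
    (hS : Metric.ball x r ⊆ G '' S) : ∃ z ∈ S, DifferentiableAt ℝ J z := by
  borelize E
  let μ : MeasureTheory.Measure E := MeasureTheory.Measure.hausdorffMeasure (Module.finrank ℝ E)
  by_contra! hno
  have hS₀ : μ S = 0 := MeasureTheory.measure_mono_null hno hJ.ae_differentiableAt
  have hGS : μ (G '' S) ≤ (K' : ENNReal) ^ (Module.finrank ℝ E : ℝ) * μ S :=
    hG.hausdorffMeasure_image_le (by positivity) S
  rw [hS₀, mul_zero] at hGS
  exact (Metric.measure_ball_pos μ x hr).ne'
    (le_antisymm ((MeasureTheory.measure_mono hS).trans hGS) bot_le)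

variable {E : Type*} [NormedAddCommGroup E] [InnerProductSpace ℝ E] {C : ℝ} {g : E → ℝ}
  {y y₀ y₁ y₂ p q q₁ q₂ : E}

lemma IsSemiSubgradient.inner_sub_ge (h₁ : IsSemiSubgradient C g y₁ (innerSL ℝ q₁))
    (h₂ : IsSemiSubgradient C g y₂ (innerSL ℝ q₂)) :
    -(C * ‖y₁ - y₂‖ ^ 2) ≤ inner ℝ (q₁ - q₂) (y₁ - y₂) := by
  have h₁₂ := h₁ y₂
  have h₂₁ := h₂ y₁
  rw [norm_sub_rev] at h₁₂
  simp only [innerSL_apply_apply, inner_sub_left, inner_sub_right] at *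
  linarith

lemma norm_le_two_mul_of_neg_le_inner {d w : E} (h : -(1 / 2 * ‖d‖ ^ 2) ≤ inner ℝ (w - d) d) :
    ‖d‖ ≤ 2 * ‖w‖ := by
  rw [inner_sub_left, real_inner_self_eq_norm_sq] at h
  have cs := real_inner_le_norm w d
  rcases (norm_nonneg d).eq_or_lt with h₀ | h₀
  · rw [← h₀]; positivity
  · nlinarith

-- The map `y + (2C)⁻¹ q` separates points of the graph of a semi-subdifferential because
-- `q + C y` is monotone in `y`; the factor `2` leaves half of that monotonicity to spare.
lemma IsSemiSubgradient.norm_sub_le_resolvent (hC : 0 < C)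
    (h₁ : IsSemiSubgradient C g y₁ (innerSL ℝ q₁)) (h₂ : IsSemiSubgradient C g y₂ (innerSL ℝ q₂)) :
    ‖y₁ - y₂‖ ≤ 2 * ‖(y₁ + (2 * C)⁻¹ • q₁) - (y₂ + (2 * C)⁻¹ • q₂)‖ := by
  refine norm_le_two_mul_of_neg_le_inner ?_
  have hdiff : (y₁ + (2 * C)⁻¹ • q₁) - (y₂ + (2 * C)⁻¹ • q₂) - (y₁ - y₂)
      = (2 * C)⁻¹ • (q₁ - q₂) := by module
  have := mul_le_mul_of_nonneg_left (h₁.inner_sub_ge h₂) (show 0 ≤ (2 * C)⁻¹ by positivity)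
  rw [hdiff, real_inner_smul_left]
  refine le_of_eq_of_le ?_ this
  field_simp

lemma IsSemiSubgradient.norm_sub_le (hC : 0 < C) (hmax : ∀ z, g z ≤ g y₀ + inner ℝ p (z - y₀))
    (hlow : g y₀ + inner ℝ p (y - y₀) - C / 2 * ‖y - y₀‖ ^ 2 ≤ g y)
    (hq : IsSemiSubgradient C g y (innerSL ℝ q)) : ‖q - p‖ ≤ C * ‖y - y₀‖ := by
  -- the best point to compare the two paraboloids at
  have hlow' := hq (y + C⁻¹ • (q - p))
  have hup := hmax (y + C⁻¹ • (q - p))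
  have hinner : inner ℝ q (q - p) - inner ℝ p (q - p) = ‖q - p‖ ^ 2 := by
    rw [← inner_sub_left, real_inner_self_eq_norm_sq]
  have hquad : C / 2 * (C⁻¹ * ‖q - p‖) ^ 2 = 1 / 2 * (C⁻¹ * ‖q - p‖ ^ 2) := by field_simp
  rw [add_sub_right_comm, inner_add_right, inner_smul_right] at hup
  simp only [innerSL_apply_apply, add_sub_cancel_left, inner_smul_right, norm_smul, norm_inv,
    Real.norm_of_nonneg hC.le, hquad] at hlow'
  have : C⁻¹ * ‖q - p‖ ^ 2 ≤ C * ‖y - y₀‖ ^ 2 := by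
    rw [← hinner, mul_sub] at *
    linarith
  rw [inv_mul_le_iff₀ hC] at this
  exact le_of_sq_le_sq (by linarith) (by positivity)

lemma IsSemiSubgradient.of_forall_le_add (hC : 0 < C)
    (hg : ∀ y, ∃ q, IsSemiSubgradient C g y (innerSL ℝ q))
    (hmax : ∀ z, g z ≤ g y₀ + inner ℝ p (z - y₀)) : IsSemiSubgradient C g y₀ (innerSL ℝ p) := by
  obtain ⟨q, hq⟩ := hg y₀
  have := hq.norm_sub_le hC hmax (by simp)
  rw [sub_self, norm_zero, mul_zero, norm_le_zero_iff, sub_eq_zero] at this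
  rwa [← this]

lemma continuous_of_forall_exists_isSemiSubgradient [FiniteDimensional ℝ E]
    (hg : ∀ y, ∃ q, IsSemiSubgradient C g y (innerSL ℝ q)) : Continuous g := by
  have hconv : ConvexOn ℝ univ fun z => g z + C / 2 * ‖z‖ ^ 2 := by
    refine convexOn_univ_of_forall_exists_subgradient fun m => ?_
    obtain ⟨q, hq⟩ := hg m
    refine ⟨(innerSL ℝ (q + C • m) : E →L[ℝ] ℝ), fun z => ?_⟩
    have hz := hq z
    have hexp := norm_add_sq_real m (z - m)
    rw [add_sub_cancel] at hexp
    simp only [ContinuousLinearMap.coe_coe, innerSL_apply_apply, inner_add_left,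
      real_inner_smul_left, hexp] at hz ⊢
    linarith
  have hcont := hconv.locallyLipschitz.continuous
  have : Continuous fun z => g z + C / 2 * ‖z‖ ^ 2 - C / 2 * ‖z‖ ^ 2 := by fun_prop
  simpa only [add_sub_cancel_right] using this

lemma exists_lipschitzWith_resolvent [FiniteDimensional ℝ E] (hC : 0 < C) (g : E → ℝ) :
    ∃ (K : NNReal) (J : E → E), LipschitzWith K J ∧
      ∀ y q, IsSemiSubgradient C g y (innerSL ℝ q) → J (y + (2 * C)⁻¹ • q) = y := by
  let D : Set E := {z | ∃ y q, IsSemiSubgradient C g y (innerSL ℝ q) ∧ y + (2 * C)⁻¹ • q = z}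
  have hD : ∀ z : E, ∃ y, z ∈ D →
      ∃ q, IsSemiSubgradient C g y (innerSL ℝ q) ∧ y + (2 * C)⁻¹ • q = z := fun z => by
    by_cases hz : z ∈ D
    · exact hz.imp fun y hy _ => hy
    · exact ⟨0, fun h => absurd h hz⟩
  choose J₀ hJ₀ using hD
  have hlip : LipschitzOnWith 2 J₀ D := LipschitzOnWith.of_dist_le_mul fun a ha b hb => by
    obtain ⟨q₁, hq₁, ea⟩ := hJ₀ a ha
    obtain ⟨q₂, hq₂, eb⟩ := hJ₀ b hb
    simpa only [ea, eb, dist_eq_norm, NNReal.coe_ofNat] using hq₁.norm_sub_le_resolvent hC hq₂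
  obtain ⟨J, hJ, hJJ⟩ := hlip.extend_finite_dimension
  refine ⟨_, J, hJ, fun y q hq => ?_⟩
  have hz : y + (2 * C)⁻¹ • q ∈ D := ⟨y, q, hq, rfl⟩
  obtain ⟨q', hq', e⟩ := hJ₀ _ hz
  have := hq'.norm_sub_le_resolvent hC hq
  rw [e, sub_self, norm_zero, mul_zero, norm_le_zero_iff, sub_eq_zero] at this
  rw [← hJJ hz, this]

lemma eventually_norm_sub_resolvent_le (hC : 0 < C) {J : E → E} {L : E →L[ℝ] E}
    (hJ : ∀ y q, IsSemiSubgradient C g y (innerSL ℝ q) → J (y + (2 * C)⁻¹ • q) = y)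
    (hmax : ∀ z, g z ≤ g y₀ + inner ℝ p (z - y₀)) (hp : IsSemiSubgradient C g y₀ (innerSL ℝ p))
    (hL : HasFDerivAt J L (y₀ + (2 * C)⁻¹ • p)) {ε : ℝ} (hε : 0 < ε) :
    ∀ᶠ y in 𝓝 y₀, ∀ q, IsSemiSubgradient C g y (innerSL ℝ q) →
      ‖(y - y₀) - L ((y - y₀) + (2 * C)⁻¹ • (q - p))‖ ≤ ε * ‖y - y₀‖ := by
  obtain ⟨δ, hδ, hball⟩ := Metric.eventually_nhds_iff_ball.1
    (hL.isLittleO.def (show 0 < ε / 2 by positivity))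
  filter_upwards [Metric.ball_mem_nhds y₀ (half_pos hδ)] with y hy q hq
  rw [mem_ball_iff_norm] at hy
  have hdiff : (y + (2 * C)⁻¹ • q) - (y₀ + (2 * C)⁻¹ • p) = (y - y₀) + (2 * C)⁻¹ • (q - p) := by
    module
  have hnorm : ‖(y - y₀) + (2 * C)⁻¹ • (q - p)‖ ≤ 2 * ‖y - y₀‖ := calc
    _ ≤ ‖y - y₀‖ + (2 * C)⁻¹ * ‖q - p‖ := by
      refine (norm_add_le _ _).trans_eq ?_
      rw [norm_smul, Real.norm_of_nonneg (by positivity)]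
    _ ≤ ‖y - y₀‖ + (2 * C)⁻¹ * (C * ‖y - y₀‖) := by
      gcongr
      exact hq.norm_sub_le hC hmax (hp y)
    _ = 3 / 2 * ‖y - y₀‖ := by field_simp; norm_num
    _ ≤ 2 * ‖y - y₀‖ := by gcongr; norm_num
  have := hball (y + (2 * C)⁻¹ • q) (by rw [mem_ball_iff_norm, hdiff]; linarith)
  rw [hJ y q hq, hJ y₀ p hp, hdiff] at this
  exact this.trans (by nlinarith)

lemma resolvent_fderiv_surjective [FiniteDimensional ℝ E] (hC : 0 < C)
    (hg : ∀ y, ∃ q, IsSemiSubgradient C g y (innerSL ℝ q)) {J : E → E} {L : E →L[ℝ] E}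
    (hJ : ∀ y q, IsSemiSubgradient C g y (innerSL ℝ q) → J (y + (2 * C)⁻¹ • q) = y)
    (hmax : ∀ z, g z ≤ g y₀ + inner ℝ p (z - y₀))
    (hL : HasFDerivAt J L (y₀ + (2 * C)⁻¹ • p)) : Function.Surjective L := by
  refine surjective_of_forall_exists_norm_sub_le fun d => ?_
  have hnear : Tendsto (fun t : ℝ => y₀ + t • d) (𝓝[>] 0) (𝓝 y₀) := by
    refine tendsto_nhdsWithin_of_tendsto_nhds ?_
    exact Continuous.tendsto' (by fun_prop) _ _ (by simp)
  obtain ⟨t, ht, ht₀⟩ := ((hnear.eventually (eventually_norm_sub_resolvent_le hC hJ hmax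
    (.of_forall_le_add hC hg hmax) hL one_half_pos)).and self_mem_nhdsWithin).exists
  obtain ⟨q, hq⟩ := hg (y₀ + t • d)
  have hscale := ht q hq
  rw [add_sub_cancel_left] at hscale
  refine ⟨t⁻¹ • (t • d + (2 * C)⁻¹ • (q - p)), ?_⟩
  have : d - L (t⁻¹ • (t • d + (2 * C)⁻¹ • (q - p)))
      = t⁻¹ • (t • d - L (t • d + (2 * C)⁻¹ • (q - p))) := by
    rw [map_smul, smul_sub t⁻¹, inv_smul_smul₀ ht₀.ne']
  rw [this, norm_smul, norm_inv, Real.norm_of_nonneg ht₀.le, inv_mul_le_iff₀ ht₀]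
  rw [norm_smul, Real.norm_of_nonneg ht₀.le] at hscale
  linarith

-- The derivative `L` of the resolvent is onto, so that `q = 2C (z - J z)` can be differentiated
-- along `y = J z`, giving `A = 2C (L⁻¹ - 1)`.
lemma exists_subgradient_derivative [FiniteDimensional ℝ E] (hC : 0 < C)
    (hg : ∀ y, ∃ q, IsSemiSubgradient C g y (innerSL ℝ q)) {J : E → E}
    (hJ : ∀ y q, IsSemiSubgradient C g y (innerSL ℝ q) → J (y + (2 * C)⁻¹ • q) = y)
    (hmax : ∀ z, g z ≤ g y₀ + inner ℝ p (z - y₀))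
    (hd : DifferentiableAt ℝ J (y₀ + (2 * C)⁻¹ • p)) :
    ∃ A : E →L[ℝ] E, ∀ ε > 0, ∀ᶠ y in 𝓝 y₀, ∀ q, IsSemiSubgradient C g y (innerSL ℝ q) →
      ‖q - p - A (y - y₀)‖ ≤ ε * ‖y - y₀‖ := by
  obtain ⟨L, hL⟩ := hd
  have hp := IsSemiSubgradient.of_forall_le_add hC hg hmax
  have hsurj := resolvent_fderiv_surjective hC hg hJ hmax hL
  let M : E →L[ℝ] E := (ContinuousLinearEquiv.ofBijective L
    (LinearMap.ker_eq_bot.2 (LinearMap.injective_iff_surjective.2 hsurj))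
    (LinearMap.range_eq_top.2 hsurj)).symm
  have hML : ∀ x, M (L x) = x := ContinuousLinearEquiv.ofBijective_symm_apply_apply L _ _
  refine ⟨(2 * C) • (M - ContinuousLinearMap.id ℝ E), fun ε hε => ?_⟩
  filter_upwards [eventually_norm_sub_resolvent_le hC hJ hmax hp hL
    (show 0 < ε / (2 * C * (‖M‖ + 1)) by positivity)] with y hy q hq
  have hA : q - p - ((2 * C) • (M - ContinuousLinearMap.id ℝ E)) (y - y₀)
      = -((2 * C) • M ((y - y₀) - L ((y - y₀) + (2 * C)⁻¹ • (q - p)))) := by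
    rw [map_sub M, hML]
    simp only [_root_.smul_apply, _root_.sub_apply, ContinuousLinearMap.id_apply]
    match_scalars <;> field_simp
  rw [hA, norm_neg, norm_smul, Real.norm_of_nonneg (by positivity)]
  calc 2 * C * ‖M ((y - y₀) - L ((y - y₀) + (2 * C)⁻¹ • (q - p)))‖
      ≤ 2 * C * ((‖M‖ + 1) * (ε / (2 * C * (‖M‖ + 1)) * ‖y - y₀‖)) := by
        gcongr
        exact (M.le_opNorm _).trans (by gcongr; exacts [(lt_add_one _).le, hy q hq])
    _ = ε * ‖y - y₀‖ := by field_simp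

lemma abs_inner_sub_sub_smul_le {A : E →L[ℝ] E} {h : E} {s ε : ℝ}
    (hA : ‖q - p - A (s • h)‖ ≤ ε * ‖h‖) :
    |inner ℝ q h - inner ℝ p h - s * inner ℝ (A h) h| ≤ ε * ‖h‖ ^ 2 := calc
  _ = |inner ℝ (q - p - A (s • h)) h| := by
    rw [inner_sub_left, inner_sub_left, map_smul, real_inner_smul_left]
  _ ≤ ‖q - p - A (s • h)‖ * ‖h‖ := abs_real_inner_le_norm _ _
  _ ≤ ε * ‖h‖ * ‖h‖ := by gcongr
  _ = ε * ‖h‖ ^ 2 := by ring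

lemma hasQuadExpansionAt_of_subgradient_derivative {A : E →L[ℝ] E}
    (hg : ∀ y, ∃ q, IsSemiSubgradient C g y (innerSL ℝ q))
    (hA : ∀ ε > 0, ∀ᶠ y in 𝓝 y₀, ∀ q, IsSemiSubgradient C g y (innerSL ℝ q) →
      ‖q - p - A (y - y₀)‖ ≤ ε * ‖y - y₀‖) :
    HasQuadExpansionAt g y₀ (innerSL ℝ p) ((innerSL ℝ).comp A) := by
  refine Asymptotics.isLittleO_iff.2 fun ε hε => ?_
  obtain ⟨δ, hδ, hball⟩ := Metric.eventually_nhds_iff_ball.1 (hA ε hε)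
  filter_upwards [Metric.ball_mem_nhds (0 : E) hδ] with h hh
  rw [mem_ball_zero_iff] at hh
  let φ : ℝ → ℝ := fun s => g (y₀ + s • h) - s * inner ℝ p h - s ^ 2 / 2 * inner ℝ (A h) h
  have hφ : |φ 0 - φ 1| ≤ ε * ‖h‖ ^ 2 := by
    refine abs_sub_le_of_sub_le_abs_add_sq
      (K := C / 2 * ‖h‖ ^ 2 + 1 / 2 * |inner ℝ (A h) h|) fun s hs t _ => ?_
    obtain ⟨q, hq⟩ := hg (y₀ + s • h)
    have hst : g (y₀ + s • h) + (t - s) * inner ℝ q h - C / 2 * ((t - s) ^ 2 * ‖h‖ ^ 2)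
        ≤ g (y₀ + t • h) := by
      have := hq (y₀ + t • h)
      rwa [add_sub_add_left_eq_sub, ← sub_smul, innerSL_apply_apply, inner_smul_right, norm_smul,
        mul_pow, Real.norm_eq_abs, sq_abs] at this
    have hsh : ‖s • h‖ ≤ ‖h‖ := by
      rw [norm_smul, Real.norm_of_nonneg hs.1]
      exact mul_le_of_le_one_left (norm_nonneg _) hs.2
    have hsub : |inner ℝ q h - inner ℝ p h - s * inner ℝ (A h) h| ≤ ε * ‖h‖ ^ 2 := by
      have := hball (y₀ + s • h) (by simpa using hsh.trans_lt hh) q hq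
      rw [add_sub_cancel_left] at this
      exact abs_inner_sub_sub_smul_le (this.trans (by gcongr))
    have hslope : (s - t) * (inner ℝ q h - inner ℝ p h - s * inner ℝ (A h) h)
        ≤ |s - t| * (ε * ‖h‖ ^ 2) :=
      (le_abs_self _).trans ((abs_mul _ _).trans_le (by gcongr))
    have hcurv : inner ℝ (A h) h * (s - t) ^ 2 ≤ |inner ℝ (A h) h| * (s - t) ^ 2 := by
      gcongr; exact le_abs_self _
    simp only [φ]
    nlinarith
  rw [abs_sub_comm] at hφ
  simp only [φ, one_smul, zero_smul, add_zero] at hφ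
  simp only [norm_pow, norm_norm]
  refine le_of_eq_of_le (congrArg _ ?_) hφ
  simp only [innerSL_apply_apply, ContinuousLinearMap.comp_apply]
  ring

end SemiSubgradient

section JensenAlexandrov

variable {E E' : Type*} [NormedAddCommGroup E] [NormedSpace ℝ E] [NormedAddCommGroup E']
  [NormedSpace ℝ E'] {C C₁ C₂ : ℝ} {f f₁ f₂ : E → ℝ} {x y : E} {P P₁ P₂ q q₁ q₂ : E →L[ℝ] ℝ}
  {B S S₁ S₂ : E →L[ℝ] E →L[ℝ] ℝ}

lemma IsSemiSubgradient.mono (hC : C₁ ≤ C₂) (h : IsSemiSubgradient C₁ f y q) :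
    IsSemiSubgradient C₂ f y q := fun z => by
  have : C₁ / 2 * ‖z - y‖ ^ 2 ≤ C₂ / 2 * ‖z - y‖ ^ 2 := by gcongr
  linarith [h z]

lemma IsSemiSubgradient.add (h₁ : IsSemiSubgradient C₁ f₁ y q₁)
    (h₂ : IsSemiSubgradient C₂ f₂ y q₂) :
    IsSemiSubgradient (C₁ + C₂) (fun z => f₁ z + f₂ z) y (q₁ + q₂) := fun z => by
  have h₁z := h₁ z
  have h₂z := h₂ z
  rw [_root_.add_apply]
  linarith

lemma IsSemiSubgradient.comp {L : E' →L[ℝ] E} {y : E'} (hC : 0 ≤ C)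
    (h : IsSemiSubgradient C f (L y) q) :
    IsSemiSubgradient (C * ‖L‖ ^ 2) (fun z => f (L z)) y (q.comp L) := fun z => by
  have hz := h (L z)
  have hnorm : C / 2 * ‖L (z - y)‖ ^ 2 ≤ C / 2 * (‖L‖ * ‖z - y‖) ^ 2 := by
    gcongr; exact L.le_opNorm _
  rw [← map_sub] at hz
  rw [ContinuousLinearMap.comp_apply]
  linarith

lemma IsSemiSubgradient.sub_quad (hB : ∀ h k, B h k = B k h) (x₀ : E)
    (h : IsSemiSubgradient C f y q) :
    IsSemiSubgradient (C + ‖B‖) (fun z => f z - 1 / 2 * B (z - x₀) (z - x₀)) y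
      (q - B (y - x₀)) := fun z => by
  have hz := h z
  have hBz := (le_abs_self _).trans (B.le_opNorm₂ (z - y) (z - y))
  have hexp : B (z - x₀) (z - x₀)
      = B (y - x₀) (y - x₀) + 2 * B (y - x₀) (z - y) + B (z - y) (z - y) := by
    rw [← sub_add_sub_cancel z y x₀]
    simp only [map_add, _root_.add_apply, hB (z - y) (y - x₀)]
    ring
  simp only [_root_.sub_apply, hexp]
  linarith

lemma HasQuadExpansionAt.add (h₁ : HasQuadExpansionAt f₁ x P₁ S₁)
    (h₂ : HasQuadExpansionAt f₂ x P₂ S₂) :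
    HasQuadExpansionAt (fun z => f₁ z + f₂ z) x (P₁ + P₂) (S₁ + S₂) :=
  (Asymptotics.IsLittleO.add h₁ h₂).congr_left fun h => by
    simp only [_root_.add_apply]
    ring

lemma HasQuadExpansionAt.congr_diag (h : HasQuadExpansionAt f x P S₁)
    (hS : ∀ h, S₁ h h = S₂ h h) : HasQuadExpansionAt f x P S₂ :=
  Asymptotics.IsLittleO.congr_left h fun k => by rw [hS]

lemma HasQuadExpansionAt.comp_affine {a : E} {L : E' →L[ℝ] E} {x : E'}
    (h : HasQuadExpansionAt f (a + L x) P S) :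
    HasQuadExpansionAt (fun z => f (a + L z)) x (P.comp L) (S.bilinearComp L L) := by
  have hL : Tendsto L (𝓝 0) (𝓝 0) := L.continuous.tendsto' _ _ (map_zero L)
  have hbig : (fun k => ‖L k‖ ^ 2) =O[𝓝 0] fun k => ‖k‖ ^ 2 :=
    (L.isBigO_id _).norm_norm.pow 2
  refine ((Asymptotics.IsLittleO.comp_tendsto h hL).trans_isBigO hbig).congr_left fun k => ?_
  simp only [Function.comp_apply, map_add, add_assoc, ContinuousLinearMap.comp_apply,
    ContinuousLinearMap.bilinearComp_apply]

lemma hasQuadExpansionAt_quad (hB : ∀ h k, B h k = B k h) (x₀ x : E) :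
    HasQuadExpansionAt (fun z => 1 / 2 * B (z - x₀) (z - x₀)) x (B (x - x₀)) B := by
  refine (Asymptotics.isLittleO_zero _ _).congr_left fun h => ?_
  have hx : x + h - x₀ = (x - x₀) + h := by abel
  simp only [hx, map_add, _root_.add_apply, hB h (x - x₀)]
  ring

lemma HasQuadExpansionAt.eventually_abs_le (h : HasQuadExpansionAt f x P S) {ε : ℝ} (hε : 0 < ε) :
    ∀ᶠ k in 𝓝 0, |f (x + k) - f x - P k - 1 / 2 * S k k| ≤ ε * ‖k‖ ^ 2 := by
  simpa using Asymptotics.isLittleO_iff.1 h hε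

lemma eq_zero_and_nonpos_of_quad_le
    (h : ∀ ε > 0, ∀ᶠ k in 𝓝 (0 : E), P k + 1 / 2 * S k k ≤ ε * ‖k‖ ^ 2) :
    P = 0 ∧ ∀ k, S k k ≤ 0 := by
  have ray : ∀ (k : E), ∀ ε > 0,
      ∀ᶠ t in 𝓝[>] (0 : ℝ), P k ≤ t * (ε * ‖k‖ ^ 2 - 1 / 2 * S k k) := by
    intro k ε hε
    have hto : Tendsto (fun t : ℝ => t • k) (𝓝[>] 0) (𝓝 0) :=
      tendsto_nhdsWithin_of_tendsto_nhds
        (Continuous.tendsto' (by fun_prop) _ _ (zero_smul ℝ k))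
    filter_upwards [hto.eventually (h ε hε), self_mem_nhdsWithin] with t ht ht₀
    simp only [map_smul, _root_.smul_apply, smul_eq_mul, norm_smul, mul_pow,
      Real.norm_eq_abs, sq_abs] at ht
    exact le_of_mul_le_mul_left (by linarith) (show 0 < t from ht₀)
  have nonpos : ∀ k, P k ≤ 0 := fun k => by
    have hto : Tendsto (fun t : ℝ => t * (1 * ‖k‖ ^ 2 - 1 / 2 * S k k)) (𝓝[>] 0) (𝓝 0) :=
      tendsto_nhdsWithin_of_tendsto_nhds (Continuous.tendsto' (by fun_prop) _ _ (zero_mul _))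
    exact ge_of_tendsto hto (ray k 1 one_pos)
  have hP : P = 0 := by
    ext k
    have := nonpos (-k)
    rw [map_neg] at this
    exact le_antisymm (nonpos k) (by simpa using this)
  refine ⟨hP, fun k => ?_⟩
  have hε : ∀ ε > 0, 1 / 2 * S k k ≤ ε * ‖k‖ ^ 2 := fun ε hε => by
    obtain ⟨t, ht, ht₀⟩ := ((ray k ε hε).and self_mem_nhdsWithin).exists
    rw [hP, _root_.zero_apply] at ht
    linarith [nonneg_of_mul_nonneg_right ht ht₀]
  have hlim : Tendsto (fun ε : ℝ => ε * ‖k‖ ^ 2) (𝓝[>] 0) (𝓝 0) :=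
    tendsto_nhdsWithin_of_tendsto_nhds (Continuous.tendsto' (by fun_prop) _ _ (zero_mul _))
  linarith [ge_of_tendsto hlim (eventually_mem_nhdsWithin.mono hε)]

lemma HasQuadExpansionAt.unique (h₁ : HasQuadExpansionAt f x P₁ S₁)
    (h₂ : HasQuadExpansionAt f x P₂ S₂) : P₁ = P₂ ∧ ∀ k, S₁ k k = S₂ k k := by
  have compare : ∀ {P₁ P₂ : E →L[ℝ] ℝ} {S₁ S₂ : E →L[ℝ] E →L[ℝ] ℝ}, HasQuadExpansionAt f x P₁ S₁ →
      HasQuadExpansionAt f x P₂ S₂ → P₁ - P₂ = 0 ∧ ∀ k, (S₁ - S₂) k k ≤ 0 :=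
    fun h₁ h₂ => eq_zero_and_nonpos_of_quad_le fun ε hε => by
      filter_upwards [h₁.eventually_abs_le (half_pos hε), h₂.eventually_abs_le (half_pos hε)]
        with k hk₁ hk₂
      rw [abs_le] at hk₁ hk₂
      simp only [_root_.sub_apply]
      linarith [hk₁.1, hk₂.2]
  obtain ⟨hP, hS⟩ := compare h₁ h₂
  refine ⟨sub_eq_zero.1 hP, fun k => le_antisymm ?_ ?_⟩
  · simpa using hS k
  · simpa using (compare h₂ h₁).2 k

lemma exists_tilted_max_hasQuadExpansionAt {E : Type*} [NormedAddCommGroup E]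
    [InnerProductSpace ℝ E] [FiniteDimensional ℝ E] {C : ℝ} (hC : 0 < C) {g : E → ℝ}
    (hg : ∀ y, ∃ q, IsSemiSubgradient C g y q) {b c r : ℝ} (hc : 0 < c) (hr : 0 < r) {z₀ : E}
    (hb : ∀ z, g z ≤ b - c * ‖z - z₀‖ ^ 2) :
    ∃ (x : E) (P : E →L[ℝ] ℝ) (S : E →L[ℝ] E →L[ℝ] ℝ), ‖P‖ < r ∧ (∀ z, g z ≤ g x + P (z - x)) ∧
      HasQuadExpansionAt g x P S := by
  replace hg : ∀ y, ∃ q, IsSemiSubgradient C g y (innerSL ℝ q) := fun y => by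
    obtain ⟨q, hq⟩ := hg y
    refine ⟨(InnerProductSpace.toDual ℝ E).symm q, ?_⟩
    rwa [← (InnerProductSpace.toDual ℝ E).apply_symm_apply q] at hq
  obtain ⟨K, J, hJlip, hJ⟩ := exists_lipschitzWith_resolvent hC g
  let G : E → E := fun z => (2 * C) • (z - J z)
  have hG : LipschitzWith (‖2 * C‖₊ * (1 + K)) G :=
    (lipschitzWith_smul (2 * C)).comp (LipschitzWith.id.sub hJlip)
  let A : Set E := {z | ∃ p y, (∀ z, g z ≤ g y + inner ℝ p (z - y)) ∧ ‖p‖ < r ∧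
    z = y + (2 * C)⁻¹ • p}
  have hball : Metric.ball 0 r ⊆ G '' A := fun p hp => by
    obtain ⟨y, hy⟩ := exists_forall_le_add_of_le_sub_sq
      (continuous_of_forall_exists_isSemiSubgradient hg) hc hb (innerSL ℝ p)
    refine ⟨y + (2 * C)⁻¹ • p, ⟨p, y, hy, mem_ball_zero_iff.1 hp, rfl⟩, ?_⟩
    simp only [G, hJ y p (.of_forall_le_add hC hg hy), add_sub_cancel_left]
    exact smul_inv_smul₀ (by positivity) p
  obtain ⟨_, ⟨p, x, hmax, hp, rfl⟩, hd⟩ :=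
    exists_differentiableAt_of_ball_subset_image hJlip hG hr hball
  obtain ⟨A, hA⟩ := exists_subgradient_derivative hC hg hJ hmax hd
  exact ⟨x, innerSL ℝ p, _, by rwa [innerSL_apply_norm], hmax,
    hasQuadExpansionAt_of_subgradient_derivative hg hA⟩

lemma HasQuadExpansionAt.nonpos_of_forall_le_add (h : HasQuadExpansionAt f x P S)
    (hmax : ∀ z, f z ≤ f x + P (z - x)) (k : E) : S k k ≤ 0 := by
  refine (eq_zero_and_nonpos_of_quad_le (P := 0) fun ε hε => ?_).2 k
  filter_upwards [h.eventually_abs_le hε] with k hk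
  have := hmax (x + k)
  rw [add_sub_cancel_left] at this
  rw [_root_.zero_apply]
  linarith [(abs_le.1 hk).1]

lemma exists_forall_le_add_of_bddAbove {α : Type*} [Nonempty α] {f : α → ℝ}
    (hf : BddAbove (range f)) {c : ℝ} (hc : 0 < c) : ∃ x₀, ∀ x, f x ≤ f x₀ + c := by
  obtain ⟨_, ⟨x₀, rfl⟩, hx₀⟩ :=
    exists_lt_of_lt_csSup (range_nonempty f) (sub_lt_self (sSup (range f)) hc)
  exact ⟨x₀, fun x => by linarith [le_csSup hf (mem_range_self x)]⟩

lemma exists_approx_max_hasQuadExpansionAt_of_inner {E : Type*} [NormedAddCommGroup E]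
    [InnerProductSpace ℝ E] [FiniteDimensional ℝ E] {C : ℝ} {f : E → ℝ}
    (hf : ∀ y, ∃ q, IsSemiSubgradient C f y q) (hbdd : BddAbove (range f)) {c : ℝ} (hc : 0 < c) :
    ∃ (x : E) (P : E →L[ℝ] ℝ) (S : E →L[ℝ] E →L[ℝ] ℝ), ‖P‖ ≤ c ∧ (∀ z, f z ≤ f x + c) ∧
      (∀ h, S h h ≤ c * ‖h‖ ^ 2) ∧ HasQuadExpansionAt f x P S := by
  let e := c / 5
  have he : 0 < e := by positivity
  obtain ⟨z₀, hz₀⟩ := exists_forall_le_add_of_bddAbove hbdd he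
  obtain ⟨b, hb⟩ := hbdd
  let B : E →L[ℝ] E →L[ℝ] ℝ := (2 * e) • innerSL ℝ
  have hBsymm : ∀ h k, B h k = B k h := fun h k => congrArg (2 * e * ·) (real_inner_comm k h)
  have hBdiag : ∀ h, 1 / 2 * B h h = e * ‖h‖ ^ 2 := fun h => by
    rw [show B h h = 2 * e * inner ℝ h h from rfl, real_inner_self_eq_norm_sq]
    ring
  obtain ⟨x, P, S, hP, hmax, hexp⟩ := exists_tilted_max_hasQuadExpansionAt
    (g := fun z => f z - 1 / 2 * B (z - z₀) (z - z₀)) (b := b) (z₀ := z₀)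
    (show 0 < max C 1 + ‖B‖ by positivity)
    (fun y => (hf y).elim fun q hq => ⟨_, (hq.mono (le_max_left C 1)).sub_quad hBsymm z₀⟩) he he
    fun z => by rw [hBdiag]; linarith [hb (mem_range_self z)]
  simp only [hBdiag] at hmax
  have hPz₀ : P (z₀ - x) ≤ e * ‖x - z₀‖ := by
    rw [norm_sub_rev]
    exact (le_abs_self _).trans ((P.le_opNorm _).trans (by gcongr))
  have hz₀x := hmax z₀
  rw [sub_self, norm_zero] at hz₀x
  have hnear : ‖x - z₀‖ ≤ 2 := by
    have : e * ‖x - z₀‖ ^ 2 ≤ e * (1 + ‖x - z₀‖) := by linarith [hz₀ x]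
    nlinarith [le_of_mul_le_mul_left this he]
  refine ⟨x, P + B (x - z₀), S + B, ?_, fun z => ?_, fun h => ?_, ?_⟩
  · have hBnorm : ‖B (x - z₀)‖ = 2 * e * ‖x - z₀‖ := by
      rw [show B (x - z₀) = (2 * e) • innerSL ℝ (x - z₀) from rfl, norm_smul, innerSL_apply_norm,
        Real.norm_of_nonneg (by positivity)]
    calc ‖P + B (x - z₀)‖ ≤ e + 2 * e * 2 := (norm_add_le _ _).trans (by rw [hBnorm]; gcongr)
      _ = c := by simp only [e]; ring
  · have : e * (‖x - z₀‖ - ‖x - z₀‖ ^ 2) ≤ e * 1 := by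
      gcongr; nlinarith [sq_nonneg (‖x - z₀‖ - 1)]
    linarith [hz₀ z, show 5 * e = c by simp only [e]; ring]
  · have := hexp.nonpos_of_forall_le_add (by simpa only [hBdiag] using hmax) h
    have hc5 : e * ‖h‖ ^ 2 * 5 = c * ‖h‖ ^ 2 := by simp only [e]; ring
    rw [_root_.add_apply, _root_.add_apply]
    nlinarith [hBdiag h, sq_nonneg ‖h‖]
  · simpa only [sub_add_cancel] using hexp.add (hasQuadExpansionAt_quad hBsymm z₀ x)

-- A form of the Jensen–Alexandrov maximum principle.
lemma exists_approx_max_hasQuadExpansionAt [FiniteDimensional ℝ E]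
    (hf : ∀ y, ∃ q, IsSemiSubgradient C f y q) (hbdd : BddAbove (range f)) {c : ℝ} (hc : 0 < c) :
    ∃ (x : E) (P : E →L[ℝ] ℝ) (S : E →L[ℝ] E →L[ℝ] ℝ), (∀ h k, S h k = S k h) ∧ ‖P‖ ≤ c ∧
      (∀ z, f z ≤ f x + c) ∧ (∀ h, S h h ≤ c * ‖h‖ ^ 2) ∧ HasQuadExpansionAt f x P S := by
  obtain ⟨e⟩ : Nonempty (E ≃L[ℝ] EuclideanSpace ℝ (Fin (Module.finrank ℝ E))) := ⟨toEuclidean⟩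
  let L : E →L[ℝ] EuclideanSpace ℝ (Fin (Module.finrank ℝ E)) := e
  let c' := c / (‖L‖ + 1) ^ 2
  have hc' : ∀ a ≤ (‖L‖ + 1) ^ 2, c' * a ≤ c := fun a ha => by
    rw [div_mul_eq_mul_div]
    exact div_le_of_le_mul₀ (by positivity) hc.le (by gcongr)
  let M : EuclideanSpace ℝ (Fin (Module.finrank ℝ E)) →L[ℝ] E := e.symm
  have hML : ∀ z, M (L z) = z := e.symm_apply_apply
  have hLM : ∀ z, L (M z) = z := e.apply_symm_apply
  have hsemi : ∀ y, ∃ q, IsSemiSubgradient (max C 0 * ‖M‖ ^ 2) (fun z => f (M z)) y q := fun y => by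
    obtain ⟨q, hq⟩ := hf (M y)
    exact ⟨q.comp M, (hq.mono (le_max_left C 0)).comp (le_max_right C 0)⟩
  obtain ⟨x, P, S, hP, hmax, hS, hexp⟩ := exists_approx_max_hasQuadExpansionAt_of_inner hsemi
    (hbdd.mono (range_comp_subset_range M f)) (show 0 < c' by positivity)
  let S' := S.bilinearComp L L
  refine ⟨M x, P.comp L, (1 / 2 : ℝ) • (S' + S'.flip), fun h k => ?_, ?_, fun z => ?_,
    fun h => ?_, ?_⟩
  · simp only [_root_.smul_apply, _root_.add_apply, ContinuousLinearMap.flip_apply, add_comm]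
  · calc ‖P.comp L‖ ≤ ‖P‖ * ‖L‖ := P.opNorm_comp_le L
      _ ≤ c' * ‖L‖ := by gcongr
      _ ≤ c := hc' _ (by nlinarith [norm_nonneg L])
  · have := hmax (L z)
    rw [hML] at this
    linarith [hc' 1 (by nlinarith [norm_nonneg L])]
  · calc ((1 / 2 : ℝ) • (S' + S'.flip)) h h = S (L h) (L h) := by
          simp only [S', _root_.smul_apply, _root_.add_apply, ContinuousLinearMap.flip_apply,
            ContinuousLinearMap.bilinearComp_apply, smul_eq_mul]
          ring
      _ ≤ c' * (‖L‖ * ‖h‖) ^ 2 := (hS _).trans (by gcongr; exact L.le_opNorm h)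
      _ = c' * ‖L‖ ^ 2 * ‖h‖ ^ 2 := by ring
      _ ≤ c * ‖h‖ ^ 2 := by gcongr; exact hc' _ (by gcongr; linarith)
  · have hexp' : HasQuadExpansionAt (fun z => f (M z)) (0 + L (M x)) P S := by rwa [zero_add, hLM]
    have := hexp'.comp_affine
    simp only [zero_add, hML] at this
    refine this.congr_diag fun h => ?_
    simp only [S', _root_.smul_apply, _root_.add_apply, ContinuousLinearMap.flip_apply,
      ContinuousLinearMap.bilinearComp_apply, smul_eq_mul]
    ring

end JensenAlexandrov

section SupConvolution

/-- `(P, S)` is a second-order superjet of `f` at `x` relative to `K`: along `K`, `f` lies below the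
quadratic polynomial with gradient `P` and Hessian `S` up to `o(‖h‖ ^ 2)`. -/
def HasSuperjetOn {E : Type*} [NormedAddCommGroup E] [NormedSpace ℝ E] (K : Set E) (f : E → ℝ)
    (x : E) (P : E →L[ℝ] ℝ) (S : E →L[ℝ] E →L[ℝ] ℝ) : Prop :=
  ∀ ε > 0, ∀ᶠ h in 𝓝 0, x + h ∈ K → f (x + h) ≤ f x + P h + 1 / 2 * S h h + ε * ‖h‖ ^ 2

/-- `U` is the sup-convolution `q ↦ sup_{r ∈ K} (G r - B (q - r) (q - r) / 2)` of `G` over `K` with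
kernel the quadratic form `B`, and `m q` is a point where the supremum is attained. -/
structure IsSupConvolution {E : Type*} [NormedAddCommGroup E] [NormedSpace ℝ E]
    (B : E →L[ℝ] E →L[ℝ] ℝ) (K : Set E) (G U : E → ℝ) (m : E → E) : Prop where
  mem : ∀ q, m q ∈ K
  eq : ∀ q, U q = G (m q) - 1 / 2 * B (q - m q) (q - m q)
  le : ∀ q, ∀ r ∈ K, G r - 1 / 2 * B (q - r) (q - r) ≤ U q

variable {E : Type*} [NormedAddCommGroup E] [NormedSpace ℝ E] {B S W : E →L[ℝ] E →L[ℝ] ℝ}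
  {K : Set E} {f₁ f₂ G G₁ G₂ U U₁ U₂ : E → ℝ} {m m₁ m₂ : E → E} {P : E →L[ℝ] ℝ} {q q₁ q₂ : E}

lemma isCompact_superlevel {X : Type*} [MetricSpace X] [ProperSpace X] {K : Set X} {G : X → ℝ}
    (hG : UpperSemicontinuousOn G K) (hK : IsClosed K) {a : ℝ}
    (hbdd : Bornology.IsBounded {r ∈ K | a ≤ G r}) : IsCompact {r ∈ K | a ≤ G r} := by
  obtain ⟨Z, hZ, hZG⟩ := upperSemicontinuousOn_iff_preimage_Ici.1 hG a
  have hclosed : IsClosed (K ∩ G ⁻¹' Ici a) := hZG ▸ hK.inter hZ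
  exact Metric.isCompact_of_isClosed_isBounded hclosed hbdd

lemma exists_forall_le_of_isBounded_superlevel {X : Type*} [MetricSpace X]
    [ProperSpace X] {K : Set X} {G : X → ℝ} (hG : UpperSemicontinuousOn G K) (hK : IsClosed K)
    (hne : K.Nonempty) (hbdd : ∀ a, Bornology.IsBounded {r ∈ K | a ≤ G r}) :
    ∃ m ∈ K, ∀ r ∈ K, G r ≤ G m := by
  obtain ⟨r₀, hr₀⟩ := hne
  have hne : {r ∈ K | G r₀ ≤ G r}.Nonempty := ⟨r₀, hr₀, le_rfl⟩
  obtain ⟨m, hm, hmax⟩ := UpperSemicontinuousOn.exists_isMaxOn hne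
    (isCompact_superlevel hG hK (hbdd (G r₀))) (hG.mono (sep_subset _ _))
  exact ⟨m, hm.1, fun r hr => (le_total (G r₀) (G r)).elim (fun h => hmax ⟨hr, h⟩)
    fun h => h.trans hm.2⟩

lemma exists_isSupConvolution [FiniteDimensional ℝ E] (hB : ∀ h, 0 ≤ B h h) (hK : IsClosed K)
    (hne : K.Nonempty) (hG : UpperSemicontinuousOn G K)
    (hbdd : ∀ a, Bornology.IsBounded {r ∈ K | a ≤ G r}) : ∃ U m, IsSupConvolution B K G U m := by
  have : ProperSpace E := FiniteDimensional.proper ℝ E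
  have attained : ∀ q, ∃ m ∈ K, ∀ r ∈ K,
      G r - 1 / 2 * B (q - r) (q - r) ≤ G m - 1 / 2 * B (q - m) (q - m) := fun q => by
    have hcont : Continuous fun r => -(1 / 2 * B (q - r) (q - r)) := by fun_prop
    simp only [sub_eq_add_neg (G _)]
    refine exists_forall_le_of_isBounded_superlevel
      (hG.add hcont.continuousOn.upperSemicontinuousOn) hK hne fun a => ?_
    exact (hbdd a).subset fun r hr => ⟨hr.1, hr.2.trans (by linarith [hB (q - r)])⟩
  choose m hmK hm using attained
  exact ⟨_, m, hmK, fun _ => rfl, hm⟩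

lemma IsSupConvolution.bddAbove_range (h : IsSupConvolution B K G U m) (hB : ∀ h, 0 ≤ B h h)
    {b : ℝ} (hG : ∀ r ∈ K, G r ≤ b) : BddAbove (range U) :=
  ⟨b, forall_mem_range.2 fun q => by linarith [h.eq q, hG _ (h.mem q), hB (q - m q)]⟩

lemma IsSupConvolution.le_add_quad (h : IsSupConvolution B K G U m) (hB : ∀ h k, B h k = B k h)
    (q k : E) : U q + B (m q - q) k - 1 / 2 * B k k ≤ U (q + k) := by
  have hle := h.le (q + k) (m q) (h.mem q)
  have hexp : B (q + k - m q) (q + k - m q)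
      = B (q - m q) (q - m q) - 2 * B (m q - q) k + B k k := by
    rw [add_sub_right_comm, ← neg_sub q (m q)]
    simp only [map_add, map_neg, _root_.add_apply, _root_.neg_apply, hB k (q - m q)]
    ring
  linarith [h.eq q]

lemma IsSupConvolution.isSemiSubgradient (h : IsSupConvolution B K G U m)
    (hB : ∀ h k, B h k = B k h) (q : E) : IsSemiSubgradient ‖B‖ U q (B (m q - q)) := fun z => by
  have hle := h.le_add_quad hB q (z - q)
  have hBz := (le_abs_self _).trans (B.le_opNorm₂ (z - q) (z - q))
  rw [add_sub_cancel] at hle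
  linarith

lemma IsSupConvolution.hasSuperjetOn (h : IsSupConvolution B K G U m)
    (hU : HasQuadExpansionAt U q P S) : HasSuperjetOn K G (m q) P S := fun ε hε => by
  filter_upwards [hU.eventually_abs_le hε] with k hk hmem
  have hle := h.le (q + k) _ hmem
  rw [add_sub_add_right_eq_sub] at hle
  linarith [h.eq q, (abs_le.1 hk).2]

lemma IsSupConvolution.eq_and_neg_le_of_hasQuadExpansionAt (h : IsSupConvolution B K G U m)
    (hB : ∀ h k, B h k = B k h) (hU : HasQuadExpansionAt U q P S) :
    P = B (m q - q) ∧ ∀ k, -B k k ≤ S k k := by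
  obtain ⟨hP, hS⟩ := eq_zero_and_nonpos_of_quad_le (P := B (m q - q) - P) (S := -(B + S))
    fun ε hε => by
      filter_upwards [hU.eventually_abs_le hε] with k hk
      simp only [_root_.neg_apply, _root_.add_apply, _root_.sub_apply]
      linarith [h.le_add_quad hB q k, (abs_le.1 hk).2]
  refine ⟨(sub_eq_zero.1 hP).symm, fun k => ?_⟩
  have := hS k
  simp only [_root_.neg_apply, _root_.add_apply] at this
  linarith

lemma HasQuadExpansionAt.of_add_const {c : ℝ}
    (h : HasQuadExpansionAt (fun z => G z + c) q P S) : HasQuadExpansionAt G q P S :=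
  Asymptotics.IsLittleO.congr_left h fun k => by ring

lemma HasQuadExpansionAt.fst_snd_of_add {P : E × E →L[ℝ] ℝ} {S : E × E →L[ℝ] E × E →L[ℝ] ℝ}
    (h : HasQuadExpansionAt (fun z : E × E => f₁ z.1 + f₂ z.2) (q₁, q₂) P S) :
    HasQuadExpansionAt f₁ q₁ (P.comp (.inl ℝ E E)) (S.bilinearComp (.inl ℝ E E) (.inl ℝ E E)) ∧
    HasQuadExpansionAt f₂ q₂ (P.comp (.inr ℝ E E)) (S.bilinearComp (.inr ℝ E E) (.inr ℝ E E)) := by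
  constructor
  · have := HasQuadExpansionAt.comp_affine (a := (0, q₂)) (L := .inl ℝ E E) (x := q₁)
      (by simpa using h)
    simp only [ContinuousLinearMap.inl_apply, Prod.fst_add, Prod.snd_add, zero_add, add_zero]
      at this
    exact this.of_add_const
  · have := HasQuadExpansionAt.comp_affine (a := (q₁, 0)) (L := .inr ℝ E E) (x := q₂)
      (by simpa using h)
    simp only [ContinuousLinearMap.inr_apply, Prod.fst_add, Prod.snd_add, zero_add, add_zero,
      add_comm (f₁ q₁)] at this
    exact this.of_add_const

lemma HasQuadExpansionAt.apply_self_of_add {P : E × E →L[ℝ] ℝ} {S : E × E →L[ℝ] E × E →L[ℝ] ℝ}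
    (h : HasQuadExpansionAt (fun z : E × E => f₁ z.1 + f₂ z.2) (q₁, q₂) P S) (z : E × E) :
    S z z = S (z.1, 0) (z.1, 0) + S (0, z.2) (0, z.2) := by
  obtain ⟨h₁, h₂⟩ := h.fst_snd_of_add
  have h₁' := HasQuadExpansionAt.comp_affine (a := 0) (L := .fst ℝ E E) (x := (q₁, q₂))
    (by simpa using h₁)
  have h₂' := HasQuadExpansionAt.comp_affine (a := 0) (L := .snd ℝ E E) (x := (q₁, q₂))
    (by simpa using h₂)
  simp only [zero_add] at h₁' h₂'
  simpa using (h.unique (h₁'.add h₂')).2 z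

lemma quad_add_add_le (hW : ∀ h, 0 ≤ W h h) (hsymm : ∀ h k, W h k = W k h) (d e f : E) :
    W (d + e + f) (d + e + f) ≤ 3 * (W d d + W e e + W f f) := by
  have hde := hW (d - e)
  have hef := hW (e - f)
  have hdf := hW (d - f)
  simp only [map_add, map_sub, _root_.add_apply, _root_.sub_apply, hsymm e d, hsymm f d,
    hsymm f e] at *
  linarith

-- The three steps `r₁ → t₁ → t₂ → r₂` of a third of the segment each cost `W (r₁ - r₂) / 6`.
lemma IsSupConvolution.sub_quad_le (h₁ : IsSupConvolution (3 • W) K G₁ U₁ m₁)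
    (h₂ : IsSupConvolution (3 • W) K G₂ U₂ m₂) {r₁ r₂ : E} (hr₁ : r₁ ∈ K) (hr₂ : r₂ ∈ K) :
    ∃ t₁ t₂, G₁ r₁ + G₂ r₂ - 1 / 2 * W (r₁ - r₂) (r₁ - r₂)
      ≤ U₁ t₁ + U₂ t₂ - 3 / 2 * W (t₁ - t₂) (t₁ - t₂) := by
  let d := (1 / 3 : ℝ) • (r₁ - r₂)
  refine ⟨r₁ - d, r₂ + d, ?_⟩
  have hle₁ := h₁.le (r₁ - d) r₁ hr₁
  have hle₂ := h₂.le (r₂ + d) r₂ hr₂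
  have hd₁₂ : r₁ - d - (r₂ + d) = d := by simp only [d]; module
  have hr₁₂ : W d d = 1 / 9 * W (r₁ - r₂) (r₁ - r₂) := by
    simp only [d, map_smul, _root_.smul_apply, smul_eq_mul]
    ring
  rw [sub_sub_cancel_left] at hle₁
  rw [add_sub_cancel_left] at hle₂
  simp only [_root_.smul_apply, map_neg, _root_.neg_apply, nsmul_eq_mul, Nat.cast_ofNat]
    at hle₁ hle₂
  rw [hd₁₂]
  linarith

lemma IsSupConvolution.le_sub_quad (h₁ : IsSupConvolution (3 • W) K G₁ U₁ m₁)
    (h₂ : IsSupConvolution (3 • W) K G₂ U₂ m₂) (hW : ∀ h, 0 ≤ W h h)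
    (hsymm : ∀ h k, W h k = W k h) (q₁ q₂ : E) :
    U₁ q₁ + U₂ q₂ - 3 / 2 * W (q₁ - q₂) (q₁ - q₂)
      ≤ G₁ (m₁ q₁) + G₂ (m₂ q₂) - 1 / 2 * W (m₁ q₁ - m₂ q₂) (m₁ q₁ - m₂ q₂) := by
  have hsplit := quad_add_add_le hW hsymm (-(q₁ - m₁ q₁)) (q₁ - q₂) (q₂ - m₂ q₂)
  rw [show -(q₁ - m₁ q₁) + (q₁ - q₂) + (q₂ - m₂ q₂) = m₁ q₁ - m₂ q₂ by abel, map_neg,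
    map_neg, _root_.neg_apply, neg_neg] at hsplit
  have heq₁ := h₁.eq q₁
  have heq₂ := h₂.eq q₂
  simp only [_root_.smul_apply, nsmul_eq_mul, Nat.cast_ofNat] at heq₁ heq₂
  linarith

end SupConvolution

section TheoremOnSums

variable {E : Type*} [NormedAddCommGroup E] [NormedSpace ℝ E] {V W : E →L[ℝ] E →L[ℝ] ℝ}
  {K : Set E} {G₁ G₂ U₁ U₂ : E → ℝ} {m₁ m₂ : E → E} {c : ℝ}

/-- The second-order information in the theorem on sums: symmetric forms `S₁`, `S₂` satisfying the
Crandall-Ishii inequality for the coupling `W (h - k) (h - k) / 2`, up to an error `c`. -/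
structure IsCrandallIshiiPair (W : E →L[ℝ] E →L[ℝ] ℝ) (c : ℝ) (S₁ S₂ : E →L[ℝ] E →L[ℝ] ℝ) :
    Prop where
  symm₁ : ∀ h k, S₁ h k = S₁ k h
  symm₂ : ∀ h k, S₂ h k = S₂ k h
  neg_le₁ : ∀ h, -(3 * W h h) ≤ S₁ h h
  neg_le₂ : ∀ h, -(3 * W h h) ≤ S₂ h h
  add_le : ∀ h k, S₁ h h + S₂ k k ≤ 3 * W (h - k) (h - k) + c * (‖h‖ ^ 2 + ‖k‖ ^ 2)

lemma exists_doubled_hasQuadExpansionAt [FiniteDimensional ℝ E] (hV : ∀ h, 0 ≤ V h h)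
    (hsymm : ∀ h k, V h k = V k h) {C₁ C₂ : ℝ} (hC₁ : 0 ≤ C₁) (hC₂ : 0 ≤ C₂)
    (h₁ : ∀ y, ∃ q, IsSemiSubgradient C₁ U₁ y q) (h₂ : ∀ y, ∃ q, IsSemiSubgradient C₂ U₂ y q)
    (hbdd₁ : BddAbove (range U₁)) (hbdd₂ : BddAbove (range U₂)) (hc : 0 < c) :
    ∃ (q₁ q₂ : E) (P₁ P₂ : E →L[ℝ] ℝ) (S₁ S₂ : E →L[ℝ] E →L[ℝ] ℝ),
      (∀ t₁ t₂, U₁ t₁ + U₂ t₂ - 1 / 2 * V (t₁ - t₂) (t₁ - t₂)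
        ≤ U₁ q₁ + U₂ q₂ - 1 / 2 * V (q₁ - q₂) (q₁ - q₂) + c) ∧
      ‖P₁ - V (q₁ - q₂)‖ ≤ c ∧ ‖P₂ + V (q₁ - q₂)‖ ≤ c ∧
      (∀ h k, S₁ h k = S₁ k h) ∧ (∀ h k, S₂ h k = S₂ k h) ∧
      (∀ h k, S₁ h h + S₂ k k ≤ V (h - k) (h - k) + c * (‖h‖ ^ 2 + ‖k‖ ^ 2)) ∧
      HasQuadExpansionAt U₁ q₁ P₁ S₁ ∧ HasQuadExpansionAt U₂ q₂ P₂ S₂ := by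
  let D : E × E →L[ℝ] E := .fst ℝ E E - .snd ℝ E E
  let VD : E × E →L[ℝ] E × E →L[ℝ] ℝ := V.bilinearComp D D
  have hVD : ∀ h k, VD h k = VD k h := fun h k => hsymm _ _
  have hsemi : ∀ z : E × E, ∃ q, IsSemiSubgradient
      (C₁ * ‖ContinuousLinearMap.fst ℝ E E‖ ^ 2 + C₂ * ‖ContinuousLinearMap.snd ℝ E E‖ ^ 2 + ‖VD‖)
      (fun z => U₁ z.1 + U₂ z.2 - 1 / 2 * VD (z - 0) (z - 0)) z q := fun z => by
    obtain ⟨p₁, hp₁⟩ := h₁ z.1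
    obtain ⟨p₂, hp₂⟩ := h₂ z.2
    exact ⟨_, ((hp₁.comp (L := .fst ℝ E E) hC₁).add
      (hp₂.comp (L := .snd ℝ E E) hC₂)).sub_quad hVD 0⟩
  have hbdd : BddAbove (range fun z : E × E => U₁ z.1 + U₂ z.2 - 1 / 2 * VD (z - 0) (z - 0)) := by
    obtain ⟨b₁, hb₁⟩ := hbdd₁
    obtain ⟨b₂, hb₂⟩ := hbdd₂
    refine ⟨b₁ + b₂, forall_mem_range.2 fun z => ?_⟩
    have : 0 ≤ VD (z - 0) (z - 0) := hV _
    linarith [hb₁ (mem_range_self z.1), hb₂ (mem_range_self z.2)]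
  obtain ⟨⟨q₁, q₂⟩, p, S, hS, hp, hmax, hle, hexp⟩ :=
    exists_approx_max_hasQuadExpansionAt hsemi hbdd hc
  have hsum : HasQuadExpansionAt (fun z : E × E => U₁ z.1 + U₂ z.2) (q₁, q₂)
      (p + VD (q₁, q₂)) (S + VD) := by
    simpa using hexp.add (hasQuadExpansionAt_quad hVD 0 (q₁, q₂))
  obtain ⟨hU₁, hU₂⟩ := hsum.fst_snd_of_add
  have hp' : ∀ k, ‖p k‖ ≤ c * ‖k‖ := p.le_of_opNorm_le hp
  refine ⟨q₁, q₂, _, _, _, _, fun t₁ t₂ => ?_, ?_, ?_, fun h k => ?_, fun h k => ?_, fun h k => ?_,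
    hU₁, hU₂⟩
  · simpa [VD, D] using hmax (t₁, t₂)
  · exact ContinuousLinearMap.opNorm_le_bound _ hc.le fun h => by simpa [VD, D] using hp' (h, 0)
  · exact ContinuousLinearMap.opNorm_le_bound _ hc.le fun h => by
      simpa [VD, D, add_assoc] using hp' (0, h)
  · exact congr($(hS _ _) + $(hVD _ _))
  · exact congr($(hS _ _) + $(hVD _ _))
  · have hsplit := hsum.apply_self_of_add (h, k)
    have hnorm : ‖(h, k)‖ ^ 2 ≤ ‖h‖ ^ 2 + ‖k‖ ^ 2 := by
      rcases max_choice ‖h‖ ‖k‖ with hmax | hmax <;> rw [Prod.norm_def, hmax] <;> simp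
    calc _ = S (h, k) (h, k) + V (h - k) (h - k) := hsplit.symm
      _ ≤ c * (‖h‖ ^ 2 + ‖k‖ ^ 2) + V (h - k) (h - k) := by
        gcongr; exact (hle _).trans (by gcongr)
      _ = _ := add_comm _ _

lemma norm_smul_add_smul_le {a b r : ℝ} {x y : E} (ha : 0 ≤ a) (hb : 0 ≤ b) (hab : a + b = 1)
    (hx : ‖x‖ ≤ r) (hy : ‖y‖ ≤ r) : ‖a • x + b • y‖ ≤ r := by
  simpa using (convex_closedBall (0 : E) r) (by simpa using hx) (by simpa using hy) ha hb hab

theorem exists_hasSuperjetOn_doubling [FiniteDimensional ℝ E] (hW : ∀ h, 0 ≤ W h h)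
    (hsymm : ∀ h k, W h k = W k h) (hK : IsClosed K) (hne : K.Nonempty)
    (hG₁ : UpperSemicontinuousOn G₁ K) (hG₂ : UpperSemicontinuousOn G₂ K)
    (hbdd₁ : ∀ a, Bornology.IsBounded {r ∈ K | a ≤ G₁ r})
    (hbdd₂ : ∀ a, Bornology.IsBounded {r ∈ K | a ≤ G₂ r}) (hc : 0 < c) :
    ∃ q₁ ∈ K, ∃ q₂ ∈ K, ∃ (P₁ P₂ : E →L[ℝ] ℝ) (S₁ S₂ : E →L[ℝ] E →L[ℝ] ℝ),
      (∀ r₁ ∈ K, ∀ r₂ ∈ K, G₁ r₁ + G₂ r₂ - 1 / 2 * W (r₁ - r₂) (r₁ - r₂)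
        ≤ G₁ q₁ + G₂ q₂ - 1 / 2 * W (q₁ - q₂) (q₁ - q₂) + c) ∧
      ‖P₁ - W (q₁ - q₂)‖ ≤ c ∧ ‖P₂ + W (q₁ - q₂)‖ ≤ c ∧ IsCrandallIshiiPair W c S₁ S₂ ∧
      HasSuperjetOn K G₁ q₁ P₁ S₁ ∧ HasSuperjetOn K G₂ q₂ P₂ S₂ := by
  have hV : ∀ h, 0 ≤ (3 • W) h h := fun h => nsmul_nonneg (hW h) 3
  have hVsymm : ∀ h k, (3 • W) h k = (3 • W) k h := fun h k => congrArg (3 • ·) (hsymm h k)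
  have hV₃ : ∀ h k, (3 • W) h k = 3 * W h k := fun h k => by simp
  have : ProperSpace E := FiniteDimensional.proper ℝ E
  obtain ⟨_, -, hle₁⟩ := exists_forall_le_of_isBounded_superlevel hG₁ hK hne hbdd₁
  obtain ⟨_, -, hle₂⟩ := exists_forall_le_of_isBounded_superlevel hG₂ hK hne hbdd₂
  obtain ⟨U₁, m₁, h₁⟩ := exists_isSupConvolution hV hK hne hG₁ hbdd₁
  obtain ⟨U₂, m₂, h₂⟩ := exists_isSupConvolution hV hK hne hG₂ hbdd₂
  obtain ⟨q₁, q₂, P₁, P₂, S₁, S₂, hmax, hP₁, hP₂, hS₁, hS₂, hle, hexp₁, hexp₂⟩ :=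
    exists_doubled_hasQuadExpansionAt hV hVsymm (norm_nonneg (3 • W)) (norm_nonneg (3 • W))
      (fun y => ⟨_, h₁.isSemiSubgradient hVsymm y⟩) (fun y => ⟨_, h₂.isSemiSubgradient hVsymm y⟩)
      (h₁.bddAbove_range hV hle₁) (h₂.bddAbove_range hV hle₂) hc
  obtain ⟨hPm₁, hneg₁⟩ := h₁.eq_and_neg_le_of_hasQuadExpansionAt hVsymm hexp₁
  obtain ⟨hPm₂, hneg₂⟩ := h₂.eq_and_neg_le_of_hasQuadExpansionAt hVsymm hexp₂
  simp only [hV₃] at hmax hle hneg₁ hneg₂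
  refine ⟨m₁ q₁, h₁.mem _, m₂ q₂, h₂.mem _, P₁, P₂, S₁, S₂, fun r₁ hr₁ r₂ hr₂ => ?_, ?_, ?_,
    ⟨hS₁, hS₂, hneg₁, hneg₂, hle⟩, h₁.hasSuperjetOn hexp₁, h₂.hasSuperjetOn hexp₂⟩
  · obtain ⟨t₁, t₂, ht⟩ := h₁.sub_quad_le h₂ hr₁ hr₂
    linarith [hmax t₁ t₂, h₁.le_sub_quad h₂ hW hsymm q₁ q₂]
  · rw [show P₁ - W (m₁ q₁ - m₂ q₂) = (2 / 3 : ℝ) • (P₁ - (3 • W) (q₁ - q₂))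
        + (1 / 3 : ℝ) • (P₂ + (3 • W) (q₁ - q₂)) by ext h; simp [hPm₁, hPm₂]; ring]
    exact norm_smul_add_smul_le (by norm_num) (by norm_num) (by norm_num) hP₁ hP₂
  · rw [show P₂ + W (m₁ q₁ - m₂ q₂) = (1 / 3 : ℝ) • (P₁ - (3 • W) (q₁ - q₂))
        + (2 / 3 : ℝ) • (P₂ + (3 • W) (q₁ - q₂)) by ext h; simp [hPm₁, hPm₂]; ring]
    exact norm_smul_add_smul_le (by norm_num) (by norm_num) (by norm_num) hP₁ hP₂

end TheoremOnSums

section SpaceTime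

variable {H : Type*} [NormedAddCommGroup H] [InnerProductSpace ℝ H]

/-- The form `((s, x), (t, y)) ↦ a ⟪x, y⟫ + b s t` on space-time, used both to couple the doubled
variables and to penalize. -/
noncomputable def spaceTimeForm (H : Type*) [NormedAddCommGroup H] [InnerProductSpace ℝ H]
    (a b : ℝ) : ℝ × H →L[ℝ] ℝ × H →L[ℝ] ℝ :=
  let innerForm : ℝ × H →L[ℝ] ℝ × H →L[ℝ] ℝ :=
    (innerSL ℝ).bilinearComp (.snd ℝ ℝ H) (.snd ℝ ℝ H)
  a • innerForm + b • (ContinuousLinearMap.mul ℝ ℝ).bilinearComp (.fst ℝ ℝ H) (.fst ℝ ℝ H)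

lemma spaceTimeForm_apply (a b : ℝ) (d h : ℝ × H) :
    spaceTimeForm H a b d h = a * inner ℝ d.2 h.2 + b * (d.1 * h.1) := rfl

lemma spaceTimeForm_self (a b : ℝ) (d : ℝ × H) :
    spaceTimeForm H a b d d = a * ‖d.2‖ ^ 2 + b * d.1 ^ 2 := by
  rw [spaceTimeForm_apply, real_inner_self_eq_norm_sq, sq d.1]

lemma spaceTimeForm_symm (a b : ℝ) (d h : ℝ × H) :
    spaceTimeForm H a b d h = spaceTimeForm H a b h d := by
  rw [spaceTimeForm_apply, spaceTimeForm_apply, real_inner_comm, mul_comm d.1]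

lemma spaceTimeForm_self_nonneg {a b : ℝ} (ha : 0 ≤ a) (hb : 0 ≤ b) (d : ℝ × H) :
    0 ≤ spaceTimeForm H a b d d := by
  rw [spaceTimeForm_self]; positivity

lemma mul_norm_sq_le_spaceTimeForm_self {c : ℝ} (hc : 0 ≤ c) (d : ℝ × H) :
    c * ‖d‖ ^ 2 ≤ spaceTimeForm H c c d d := by
  rw [spaceTimeForm_self, ← mul_add, ← sq_abs d.1, ← Real.norm_eq_abs, Prod.norm_def]
  gcongr
  rcases max_choice ‖d.1‖ ‖d.2‖ with h | h <;> rw [h] <;> simp [sq_nonneg]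

/-- The spatial gradient of a linear form on space-time. -/
noncomputable def spatialGrad :
    (ℝ × EuclideanSpace ℝ (Fin n) →L[ℝ] ℝ) →ₗ[ℝ] EuclideanSpace ℝ (Fin n) where
  toFun P := WithLp.toLp 2 fun i => P (0, EuclideanSpace.single i 1)
  map_add' _ _ := rfl
  map_smul' _ _ := rfl

/-- The spatial Hessian of a quadratic form on space-time, as a matrix. -/
noncomputable def spatialHess :
    (ℝ × EuclideanSpace ℝ (Fin n) →L[ℝ] ℝ × EuclideanSpace ℝ (Fin n) →L[ℝ] ℝ) →ₗ[ℝ]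
      Matrix (Fin n) (Fin n) ℝ where
  toFun S := Matrix.of fun i j => S (0, EuclideanSpace.single i 1) (0, EuclideanSpace.single j 1)
  map_add' _ _ := rfl
  map_smul' _ _ := rfl

@[simp] lemma spatialGrad_apply (P : ℝ × EuclideanSpace ℝ (Fin n) →L[ℝ] ℝ) (i : Fin n) :
    spatialGrad P i = P (0, EuclideanSpace.single i 1) := rfl

@[simp] lemma spatialHess_apply
    (S : ℝ × EuclideanSpace ℝ (Fin n) →L[ℝ] ℝ × EuclideanSpace ℝ (Fin n) →L[ℝ] ℝ) (i j : Fin n) :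
    spatialHess S i j = S (0, EuclideanSpace.single i 1) (0, EuclideanSpace.single j 1) := rfl

lemma prod_zero_eq_sum (ξ : EuclideanSpace ℝ (Fin n)) :
    ((0 : ℝ), ξ) = ∑ i, ξ i • ((0 : ℝ), EuclideanSpace.single i (1 : ℝ)) := by
  refine Prod.ext (by simp [Prod.fst_sum]) ?_
  ext j
  simp [Prod.snd_sum, Pi.single_apply, WithLp.ofLp_sum]

lemma inner_spatialGrad (P : ℝ × EuclideanSpace ℝ (Fin n) →L[ℝ] ℝ)
    (ξ : EuclideanSpace ℝ (Fin n)) : inner ℝ (spatialGrad P) ξ = P (0, ξ) := by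
  rw [prod_zero_eq_sum ξ, map_sum, PiLp.inner_apply]
  exact Finset.sum_congr rfl fun i _ => by simp [-Prod.smul_mk]

lemma norm_spatialGrad_le (P : ℝ × EuclideanSpace ℝ (Fin n) →L[ℝ] ℝ) : ‖spatialGrad P‖ ≤ ‖P‖ := by
  have h : ‖spatialGrad P‖ * ‖spatialGrad P‖ ≤ ‖P‖ * ‖spatialGrad P‖ := by
    rw [← real_inner_self_eq_norm_mul_norm, inner_spatialGrad]
    refine (le_abs_self _).trans ((P.le_opNorm _).trans_eq ?_)
    simp [Prod.norm_def]
  rcases (norm_nonneg (spatialGrad P)).eq_or_lt with h₀ | h₀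
  · exact h₀ ▸ norm_nonneg P
  · exact le_of_mul_le_mul_right h h₀

lemma spatialGrad_spaceTimeForm (a b : ℝ) (d : ℝ × EuclideanSpace ℝ (Fin n)) :
    spatialGrad (spaceTimeForm _ a b d) = a • d.2 := by
  ext i
  simp [spaceTimeForm_apply, EuclideanSpace.inner_single_right]

lemma dotProduct_spatialHess_mulVec
    (S : ℝ × EuclideanSpace ℝ (Fin n) →L[ℝ] ℝ × EuclideanSpace ℝ (Fin n) →L[ℝ] ℝ)
    (ξ : Fin n → ℝ) :
    ξ ⬝ᵥ spatialHess S *ᵥ ξ = S (0, WithLp.toLp 2 ξ) (0, WithLp.toLp 2 ξ) := by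
  rw [prod_zero_eq_sum]
  simp only [map_sum, map_smul, _root_.sum_apply, _root_.smul_apply, smul_eq_mul,
    dotProduct, mulVec, spatialHess_apply, Finset.mul_sum]
  rw [Finset.sum_comm]
  exact Finset.sum_congr rfl fun i _ => Finset.sum_congr rfl fun j _ => by ring

lemma spatialHess_spaceTimeForm (a b : ℝ) :
    spatialHess (spaceTimeForm (EuclideanSpace ℝ (Fin n)) a b) = a • 1 := by
  ext i j
  simp [spaceTimeForm_apply, EuclideanSpace.inner_single_right, one_apply,
    eq_comm]

lemma isSymm_spatialHess
    {S : ℝ × EuclideanSpace ℝ (Fin n) →L[ℝ] ℝ × EuclideanSpace ℝ (Fin n) →L[ℝ] ℝ}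
    (hS : ∀ h k, S h k = S k h) : (spatialHess S).IsSymm :=
  IsSymm.ext fun _ _ => hS _ _

end SpaceTime

section QuadraticTestFunction

variable {E : Type*} [NormedAddCommGroup E] [NormedSpace ℝ E]

/-- The quadratic test function with value `0`, derivative `P` and second derivative `S` at `q`. -/
noncomputable def quadTest (P : E →L[ℝ] ℝ) (S : E →L[ℝ] E →L[ℝ] ℝ) (q : E) : E → ℝ :=
  fun r => P (r - q) + 1 / 2 * S (r - q) (r - q)

lemma contDiff_quadTest (P : E →L[ℝ] ℝ) (S : E →L[ℝ] E →L[ℝ] ℝ) (q : E) {k : WithTop ℕ∞} :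
    ContDiff ℝ k (quadTest P S q) := by
  unfold quadTest
  fun_prop

lemma fderiv_quadTest {S : E →L[ℝ] E →L[ℝ] ℝ} (hS : ∀ h k, S h k = S k h) (P : E →L[ℝ] ℝ)
    (q r : E) : fderiv ℝ (quadTest P S q) r = P + S (r - q) := by
  have hsub : HasFDerivAt (fun r => r - q) (.id ℝ E) r := (hasFDerivAt_id r).sub_const q
  have hquad := ((S.hasFDerivAt.comp r hsub).clm_apply hsub).const_mul (1 / 2 : ℝ)
  refine (((P.hasFDerivAt.comp r hsub).add hquad).fderiv).trans ?_
  ext h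
  simp [hS h r, hS h q]
  ring

variable {P : ℝ × EuclideanSpace ℝ (Fin n) →L[ℝ] ℝ}
  {S : ℝ × EuclideanSpace ℝ (Fin n) →L[ℝ] ℝ × EuclideanSpace ℝ (Fin n) →L[ℝ] ℝ}

lemma ptDeriv_quadTest_self (hS : ∀ h k, S h k = S k h) (q : ℝ × EuclideanSpace ℝ (Fin n)) :
    ptDeriv (quadTest P S q) q = P (1, 0) := by
  simp [ptDeriv, fderiv_quadTest hS]

lemma pxGrad_quadTest_self (hS : ∀ h k, S h k = S k h) (q : ℝ × EuclideanSpace ℝ (Fin n)) :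
    pxGrad (quadTest P S q) q = spatialGrad P := by
  ext i
  simp [pxGrad, fderiv_quadTest hS]

lemma pxHess_quadTest_self (hS : ∀ h k, S h k = S k h) (q : ℝ × EuclideanSpace ℝ (Fin n)) :
    pxHess (quadTest P S q) q = spatialHess S := by
  ext i j
  have hfun : (fun r => fderiv ℝ (quadTest P S q) r (0, EuclideanSpace.single j 1)) =
      fun r => P (0, EuclideanSpace.single j 1) + S (0, EuclideanSpace.single j 1) (r - q) := by
    funext r
    rw [fderiv_quadTest hS, _root_.add_apply, hS]
  rw [pxHess, hfun, fderiv_const_add, fderiv_comp_sub, ContinuousLinearMap.fderiv]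
  exact hS _ _

end QuadraticTestFunction

lemma HasSuperjetOn.of_sub_quad {E : Type*} [NormedAddCommGroup E] [NormedSpace ℝ E] {K : Set E}
    {f : E → ℝ} {q r : E} {P : E →L[ℝ] ℝ} {S V : E →L[ℝ] E →L[ℝ] ℝ} (hV : ∀ h k, V h k = V k h)
    (hf : HasSuperjetOn K (fun x => f x - 1 / 2 * V (x - r) (x - r)) q P S) :
    HasSuperjetOn K f q (P + V (q - r)) (S + V) := by
  intro ε hε
  filter_upwards [hf ε hε] with h hh hK
  have hexpand : V (q + h - r) (q + h - r)
      = V (q - r) (q - r) + 2 * V (q - r) h + V h h := by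
    rw [add_sub_right_comm]
    simp only [map_add, _root_.add_apply, hV h (q - r)]
    ring
  have := hh hK
  simp only [_root_.add_apply]
  linarith

section Viscosity

/-- The type of the nonlinearity `F(t, x, r, p, X)` in the equation `∂ₜu - F = 0`. -/
abbrev ParabolicOperator (n : ℕ) : Type :=
  ℝ → EuclideanSpace ℝ (Fin n) → ℝ → EuclideanSpace ℝ (Fin n) → Matrix (Fin n) (Fin n) ℝ → ℝ

/-- `u` is a viscosity subsolution of `∂ₜu - F = 0` on `(0, T] × ℝⁿ`, tested by `C²` functions. -/
def IsViscositySubsolution (T : ℝ) (F : ParabolicOperator n)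
    (u : ℝ × EuclideanSpace ℝ (Fin n) → ℝ) : Prop :=
  ∀ ψ : ℝ × EuclideanSpace ℝ (Fin n) → ℝ, ContDiff ℝ 2 ψ → ∀ t₀ ∈ Ioc 0 T, ∀ x₀,
    IsLocalMaxOn (fun q => u q - ψ q) (Ioc 0 T ×ˢ univ) (t₀, x₀) →
    ptDeriv ψ (t₀, x₀) - F t₀ x₀ (u (t₀, x₀)) (pxGrad ψ (t₀, x₀)) (pxHess ψ (t₀, x₀)) ≤ 0

/-- `v` is a viscosity supersolution of `∂ₜv - F = 0` on `(0, T] × ℝⁿ`, tested by `C²` functions. -/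
def IsViscositySupersolution (T : ℝ) (F : ParabolicOperator n)
    (v : ℝ × EuclideanSpace ℝ (Fin n) → ℝ) : Prop :=
  ∀ ψ : ℝ × EuclideanSpace ℝ (Fin n) → ℝ, ContDiff ℝ 2 ψ → ∀ t₀ ∈ Ioc 0 T, ∀ x₀,
    IsLocalMinOn (fun q => v q - ψ q) (Ioc 0 T ×ˢ univ) (t₀, x₀) →
    0 ≤ ptDeriv ψ (t₀, x₀) - F t₀ x₀ (v (t₀, x₀)) (pxGrad ψ (t₀, x₀)) (pxHess ψ (t₀, x₀))

variable {T : ℝ} {F : ParabolicOperator n} {u v : ℝ × EuclideanSpace ℝ (Fin n) → ℝ}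
  {q : ℝ × EuclideanSpace ℝ (Fin n)} {P : ℝ × EuclideanSpace ℝ (Fin n) →L[ℝ] ℝ}
  {S : ℝ × EuclideanSpace ℝ (Fin n) →L[ℝ] ℝ × EuclideanSpace ℝ (Fin n) →L[ℝ] ℝ}

lemma IsViscositySupersolution.neg (hv : IsViscositySupersolution T F v) :
    IsViscositySubsolution T (fun t x r p X => -F t x (-r) (-p) (-X)) (-v) := by
  intro ψ hψ t₀ ht₀ x₀ hmax
  have hmin : IsLocalMinOn (fun q => v q - (-ψ) q) (Ioc 0 T ×ˢ univ) (t₀, x₀) := by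
    simpa [sub_eq_add_neg, add_comm] using hmax.neg
  have ht : ptDeriv (-ψ) (t₀, x₀) = -ptDeriv ψ (t₀, x₀) := by simp [ptDeriv, fderiv_neg]
  have hx : pxGrad (-ψ) (t₀, x₀) = -pxGrad ψ (t₀, x₀) := by ext i; simp [pxGrad, fderiv_neg]
  have hxx : pxHess (-ψ) (t₀, x₀) = -pxHess ψ (t₀, x₀) := by
    ext i j
    simp [pxHess, fderiv_neg, fderiv_fun_neg]
  have := hv (-ψ) hψ.neg t₀ ht₀ x₀ hmin
  rw [ht, hx, hxx] at this
  simp only [Pi.neg_apply, neg_neg]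
  linarith

lemma IsViscositySubsolution.apply_le_of_hasSuperjetOn (hu : IsViscositySubsolution T F u)
    (hS : ∀ h k, S h k = S k h) (hq : q.1 ∈ Ioc 0 T)
    (hjet : HasSuperjetOn (Icc 0 T ×ˢ univ) u q P S) {c : ℝ} (hc : 0 < c) :
    P (1, 0) ≤ F q.1 q.2 (u q) (spatialGrad P) (spatialHess S + (2 * c) • 1) := by
  set S' := S + spaceTimeForm _ (2 * c) (2 * c)
  have hS' : ∀ h k, S' h k = S' k h := fun h k => congr($(hS h k) + $(spaceTimeForm_symm _ _ h k))
  have hmax : IsLocalMaxOn (fun r => u r - quadTest P S' q r) (Ioc 0 T ×ˢ univ) q := by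
    have htendsto : Tendsto (fun r => r - q) (𝓝[Ioc 0 T ×ˢ univ] q) (𝓝 0) :=
      ((continuous_id.sub continuous_const).tendsto' q 0 (sub_self q)).mono_left
        nhdsWithin_le_nhds
    filter_upwards [htendsto.eventually (hjet c hc), self_mem_nhdsWithin] with r hr hrT
    have hle := hr (by rw [add_sub_cancel]; exact ⟨Ioc_subset_Icc_self hrT.1, mem_univ _⟩)
    have hnorm := mul_norm_sq_le_spaceTimeForm_self (mul_pos two_pos hc).le (r - q)
    rw [add_sub_cancel] at hle
    simp only [quadTest, S', _root_.add_apply, sub_self, map_zero, mul_zero]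
    linarith
  have h := hu _ (contDiff_quadTest P S' q) q.1 hq q.2 hmax
  rw [Prod.mk.eta, ptDeriv_quadTest_self hS', pxGrad_quadTest_self hS', pxHess_quadTest_self hS',
    map_add, spatialHess_spaceTimeForm] at h
  exact sub_nonpos.1 h

end Viscosity

section CrandallIshii

/-- The matrix inequality `-3a I ≤ diag(X, -Y) ≤ 3a [[I, -I], [-I, I]]`, in terms of quadratic
forms. -/
def CrandallIshiiIneq (a : ℝ) (X Y : Matrix (Fin n) (Fin n) ℝ) : Prop :=
  ∀ ξ η : Fin n → ℝ,
    -(3 * a) * ((∑ i, ξ i ^ 2) + ∑ i, η i ^ 2) ≤ ξ ⬝ᵥ X.mulVec ξ - η ⬝ᵥ Y.mulVec η ∧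
    ξ ⬝ᵥ X.mulVec ξ - η ⬝ᵥ Y.mulVec η ≤ 3 * a * ∑ i, (ξ i - η i) ^ 2

lemma IsCrandallIshiiPair.crandallIshiiIneq {a b c : ℝ}
    {S₁ S₂ : ℝ × EuclideanSpace ℝ (Fin n) →L[ℝ] ℝ × EuclideanSpace ℝ (Fin n) →L[ℝ] ℝ}
    (h : IsCrandallIshiiPair (spaceTimeForm _ a b) c S₁ S₂) (hc : 0 ≤ c) :
    CrandallIshiiIneq (a + c / 3) (spatialHess S₁ - c • 1) (-(spatialHess S₂ - c • 1)) := by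
  intro ξ η
  have hnorm (ζ : Fin n → ℝ) : ‖((0 : ℝ), WithLp.toLp 2 ζ)‖ ^ 2 = ∑ i, ζ i ^ 2 := by
    simp [Prod.norm_def, EuclideanSpace.norm_sq_eq]
  have hform (S : ℝ × EuclideanSpace ℝ (Fin n) →L[ℝ] ℝ × EuclideanSpace ℝ (Fin n) →L[ℝ] ℝ)
      (ζ : Fin n → ℝ) : ζ ⬝ᵥ (spatialHess S - c • 1) *ᵥ ζ
        = S (0, WithLp.toLp 2 ζ) (0, WithLp.toLp 2 ζ) - c * ∑ i, ζ i ^ 2 := by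
    rw [sub_mulVec, dotProduct_sub, dotProduct_spatialHess_mulVec, smul_mulVec, one_mulVec,
      dotProduct_smul, smul_eq_mul]
    simp [dotProduct, sq]
  have hself (ζ : Fin n → ℝ) : spaceTimeForm (EuclideanSpace ℝ (Fin n)) a b
      (0, WithLp.toLp 2 ζ) (0, WithLp.toLp 2 ζ) = a * ∑ i, ζ i ^ 2 := by
    rw [spaceTimeForm_self, EuclideanSpace.norm_sq_eq]
    simp
  have hlow₁ := h.neg_le₁ (0, WithLp.toLp 2 ξ)
  have hlow₂ := h.neg_le₂ (0, WithLp.toLp 2 η)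
  have hup := h.add_le (0, WithLp.toLp 2 ξ) (0, WithLp.toLp 2 η)
  have hsub : ((0 : ℝ), WithLp.toLp 2 ξ) - (0, WithLp.toLp 2 η) = (0, WithLp.toLp 2 (ξ - η)) := by
    simp
  rw [hself] at hlow₁ hlow₂
  rw [hsub, hself, hnorm, hnorm] at hup
  rw [neg_mulVec, dotProduct_neg, hform, hform]
  have hsq : 0 ≤ c * ∑ i, (ξ i - η i) ^ 2 := by positivity
  simp only [Pi.sub_apply] at hup
  constructor <;> linarith

lemma CrandallIshiiIneq.neg_swap {a : ℝ} {X Y : Matrix (Fin n) (Fin n) ℝ}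
    (h : CrandallIshiiIneq a X Y) : CrandallIshiiIneq a (-Y) (-X) := by
  intro ξ η
  have h' := h η ξ
  simp only [neg_mulVec, dotProduct_neg, sub_neg_eq_add, ← sub_eq_neg_add, sub_sq_comm (ξ _)]
  exact ⟨by rw [add_comm]; exact h'.1, h'.2⟩

lemma CrandallIshiiIneq.abs_apply_le {a : ℝ} {X Y : Matrix (Fin n) (Fin n) ℝ}
    (h : CrandallIshiiIneq a X Y) (hX : X.IsSymm) (i j : Fin n) : |X i j| ≤ 3 * a := by
  have hquad (ξ : Fin n → ℝ) : |ξ ⬝ᵥ X *ᵥ ξ| ≤ 3 * a * ∑ k, ξ k ^ 2 :=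
    abs_le.2 ⟨by simpa using (h ξ 0).1, by simpa using (h ξ 0).2⟩
  have hsq (ξ : Fin n → ℝ) : ∑ k, ξ k ^ 2 = ξ ⬝ᵥ ξ := by simp [dotProduct, sq]
  have hp := abs_le.1 (hquad (Pi.single i 1 + Pi.single j 1))
  have hm := abs_le.1 (hquad (Pi.single i 1 - Pi.single j 1))
  simp only [hsq, mulVec_add, mulVec_sub, dotProduct_add, add_dotProduct, dotProduct_sub,
    sub_dotProduct, mulVec_single_one, single_one_dotProduct, col_apply, hX.apply i j,
    Pi.single_eq_same] at hp hm
  rw [abs_le]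
  constructor <;> linarith

end CrandallIshii

lemma isBounded_superlevel_sub_spaceTimeForm {H : Type*} [NormedAddCommGroup H]
    [InnerProductSpace ℝ H] {T C c : ℝ} {f : ℝ × H → ℝ} (hf : ∀ p, f p ≤ C) (hc : 0 < c)
    (r : ℝ × H) (m : ℝ) : Bornology.IsBounded {p ∈ Icc 0 T ×ˢ univ |
      m ≤ f p - 1 / 2 * spaceTimeForm H (2 * c) 0 (p - r) (p - r)} := by
  refine ((Metric.isBounded_Icc 0 T).prod
    (Metric.isBounded_closedBall (x := r.2) (r := √((C - m) / c)))).subset ?_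
  rintro p ⟨hpT, hpm⟩
  refine ⟨hpT.1, mem_closedBall_iff_norm.2 (Real.le_sqrt_of_sq_le ?_)⟩
  rw [spaceTimeForm_self, Prod.snd_sub] at hpm
  rw [le_div_iff₀ hc]
  linarith [hf p]

section ViscosityDoubling

variable {T a b c : ℝ} {F : ParabolicOperator n} {u v : ℝ × EuclideanSpace ℝ (Fin n) → ℝ}

lemma IsViscositySubsolution.exists_gradient_of_hasSuperjetOn_penalized
    (hu : IsViscositySubsolution T F u) (hc : 0 < c) {q r d : ℝ × EuclideanSpace ℝ (Fin n)}
    (hq : q ∈ Icc 0 T ×ˢ univ) {P : ℝ × EuclideanSpace ℝ (Fin n) →L[ℝ] ℝ}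
    {S : ℝ × EuclideanSpace ℝ (Fin n) →L[ℝ] ℝ × EuclideanSpace ℝ (Fin n) →L[ℝ] ℝ}
    (hS : ∀ h k, S h k = S k h) (hP : ‖P - spaceTimeForm _ a b d‖ ≤ c)
    (hjet : HasSuperjetOn (Icc 0 T ×ˢ univ)
      (fun p => u p - 1 / 2 * spaceTimeForm _ (2 * c) 0 (p - r) (p - r)) q P S) :
    ∃ g, ‖g - a • d.2‖ ≤ c + 2 * c * ‖q.2 - r.2‖ ∧ (0 < q.1 →
      b * d.1 - c ≤ F q.1 q.2 (u q) g (spatialHess S - c • 1 + (5 * c) • 1)) := by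
  set V := spaceTimeForm (EuclideanSpace ℝ (Fin n)) (2 * c) 0
  have hjet' := hjet.of_sub_quad (spaceTimeForm_symm _ _)
  refine ⟨spatialGrad (P + V (q - r)), ?_, fun hq₀ => ?_⟩
  · have hsplit : spatialGrad (P + V (q - r)) - a • d.2
        = spatialGrad (P - spaceTimeForm _ a b d) + (2 * c) • (q.2 - r.2) := by
      rw [map_add, map_sub spatialGrad P, spatialGrad_spaceTimeForm, spatialGrad_spaceTimeForm,
        Prod.snd_sub]
      abel
    rw [hsplit]
    refine (norm_add_le _ _).trans (add_le_add ((norm_spatialGrad_le _).trans hP) ?_)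
    rw [norm_smul, Real.norm_of_nonneg (by positivity)]
  · have hSV : ∀ h k, (S + V) h k = (S + V) k h :=
      fun h k => congr($(hS h k) + $(spaceTimeForm_symm _ _ h k))
    have hle := hu.apply_le_of_hasSuperjetOn hSV ⟨hq₀, hq.1.2⟩ hjet' hc
    have htime : b * d.1 - c ≤ (P + V (q - r)) (1, 0) := by
      have := (abs_le.1 (((P - spaceTimeForm _ a b d).le_opNorm (1, 0)).trans
        (by simpa [Prod.norm_def] using hP))).1
      simp only [_root_.add_apply, _root_.sub_apply, V, spaceTimeForm_apply, inner_zero_right,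
        mul_zero, mul_one, zero_mul, add_zero, zero_add] at this ⊢
      linarith
    have hmat : spatialHess (S + V) + (2 * c) • (1 : Matrix (Fin n) (Fin n) ℝ)
        = spatialHess S - c • 1 + (5 * c) • 1 := by
      rw [map_add, spatialHess_spaceTimeForm]
      module
    exact htime.trans (hmat ▸ hle)

/-- A viscosity subsolution `u` and a viscosity supersolution `v` of `∂ₜw - F = 0`, semicontinuous
on `[0, T] × ℝⁿ` and bounded by `C`: the two functions to be compared. -/
structure IsSubSupersolutionPair (T : ℝ) (F : ParabolicOperator n) (C : ℝ)
    (u v : ℝ × EuclideanSpace ℝ (Fin n) → ℝ) : Prop where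
  sub : IsViscositySubsolution T F u
  super : IsViscositySupersolution T F v
  usc : UpperSemicontinuousOn u (Icc 0 T ×ˢ univ)
  lsc : LowerSemicontinuousOn v (Icc 0 T ×ˢ univ)
  abs_le_left : ∀ p, |u p| ≤ C
  abs_le_right : ∀ p, |v p| ≤ C

theorem IsSubSupersolutionPair.exists_viscosity_doubling {C : ℝ}
    (h : IsSubSupersolutionPair T F C u v) (ha : 0 ≤ a) (hb : 0 ≤ b) (hc : 0 < c)
    {r₁ r₂ : ℝ × EuclideanSpace ℝ (Fin n)} (hr₁ : r₁ ∈ Icc 0 T ×ˢ univ)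
    (hr₂ : r₂ ∈ Icc 0 T ×ˢ univ) :
    ∃ q₁ ∈ Icc 0 T ×ˢ univ, ∃ q₂ ∈ Icc 0 T ×ˢ univ, ∃ g₁ g₂, ∃ X Y : Matrix (Fin n) (Fin n) ℝ,
      u r₁ - v r₂ - 1 / 2 * spaceTimeForm _ a b (r₁ - r₂) (r₁ - r₂)
          + c * ‖q₁.2 - r₁.2‖ ^ 2 + c * ‖q₂.2 - r₂.2‖ ^ 2
        ≤ u q₁ - v q₂ - 1 / 2 * spaceTimeForm _ a b (q₁ - q₂) (q₁ - q₂) + c ∧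
      ‖g₁ - a • (q₁.2 - q₂.2)‖ ≤ c + 2 * c * ‖q₁.2 - r₁.2‖ ∧
      ‖g₂ - a • (q₁.2 - q₂.2)‖ ≤ c + 2 * c * ‖q₂.2 - r₂.2‖ ∧
      X.IsSymm ∧ Y.IsSymm ∧ CrandallIshiiIneq (a + c / 3) X Y ∧
      (0 < q₁.1 → 0 < q₂.1 → -(2 * c) ≤ F q₁.1 q₁.2 (u q₁) g₁ (X + (5 * c) • 1)
        - F q₂.1 q₂.2 (v q₂) g₂ (Y - (5 * c) • 1)) := by
  set V := spaceTimeForm (EuclideanSpace ℝ (Fin n)) (2 * c) 0 with hV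
  have hpen (r : ℝ × EuclideanSpace ℝ (Fin n)) : UpperSemicontinuousOn
      (fun p => -(1 / 2 * V (p - r) (p - r))) (Icc 0 T ×ˢ univ) :=
    (by fun_prop : Continuous fun p => -(1 / 2 * V (p - r) (p - r))).continuousOn
      |>.upperSemicontinuousOn
  have hu_usc : UpperSemicontinuousOn (fun p => u p - 1 / 2 * V (p - r₁) (p - r₁))
      (Icc 0 T ×ˢ univ) := by simpa only [sub_eq_add_neg] using h.usc.add (hpen r₁)
  have hv_usc : UpperSemicontinuousOn (fun p => (-v) p - 1 / 2 * V (p - r₂) (p - r₂))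
      (Icc 0 T ×ˢ univ) := by simpa only [sub_eq_add_neg] using h.lsc.neg.add (hpen r₂)
  obtain ⟨q₁, hq₁, q₂, hq₂, P₁, P₂, S₁, S₂, hmax, hP₁, hP₂, hpair, hjet₁, hjet₂⟩ :=
    exists_hasSuperjetOn_doubling (spaceTimeForm_self_nonneg ha hb) (spaceTimeForm_symm a b)
      (isClosed_Icc.prod isClosed_univ) ⟨r₁, hr₁⟩ hu_usc hv_usc
      (isBounded_superlevel_sub_spaceTimeForm (fun p => (abs_le.1 (h.abs_le_left p)).2) hc r₁)
      (isBounded_superlevel_sub_spaceTimeForm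
        (fun p => neg_le.1 (abs_le.1 (h.abs_le_right p)).1) hc r₂) hc
  obtain ⟨g₁, hg₁, hF₁⟩ :=
    h.sub.exists_gradient_of_hasSuperjetOn_penalized hc hq₁ hpair.symm₁ hP₁ hjet₁
  obtain ⟨g₂, hg₂, hF₂⟩ := h.super.neg.exists_gradient_of_hasSuperjetOn_penalized hc hq₂ hpair.symm₂
    (d := -(q₁ - q₂)) (by simpa only [map_neg, sub_neg_eq_add] using hP₂) hjet₂
  refine ⟨q₁, hq₁, q₂, hq₂, g₁, -g₂, _, _, ?_, hg₁, ?_, ?_, ?_,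
    hpair.crandallIshiiIneq hc.le, fun h₁ h₂ => ?_⟩
  · have := hmax r₁ hr₁ r₂ hr₂
    simp only [hV, spaceTimeForm_self (2 * c) 0, sub_self, Pi.neg_apply, Prod.snd_sub,
      Prod.snd_zero, norm_zero] at this
    linarith
  · refine (norm_neg _).symm.trans_le ((congrArg norm ?_).trans_le hg₂)
    rw [Prod.snd_neg, Prod.snd_sub]
    module
  · exact (isSymm_spatialHess hpair.symm₁).sub (isSymm_one.smul c)
  · exact ((isSymm_spatialHess hpair.symm₂).sub (isSymm_one.smul c)).neg
  · have hle₁ := hF₁ h₁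
    have hle₂ := hF₂ h₂
    simp only [Pi.neg_apply, neg_neg, Prod.fst_neg, neg_add' (spatialHess S₂ - _)] at hle₂
    linarith

end ViscosityDoubling

section StructureCondition

/-- The structural condition (3.14) of the User's Guide, with a modulus `θ` depending on the bound
`R` for the third argument. -/
def StructureCondition (T : ℝ) (F : ParabolicOperator n) : Prop :=
  ∀ R > (0 : ℝ), ∃ θ : ℝ → ℝ, (∀ s, 0 ≤ θ s) ∧ Tendsto θ (𝓝[>] 0) (𝓝 0) ∧
    ∀ t ∈ Icc 0 T, ∀ (x xt : EuclideanSpace ℝ (Fin n)) (r a : ℝ) (X Y : Matrix (Fin n) (Fin n) ℝ),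
      |r| ≤ R → 0 < a → CrandallIshiiIneq a X Y →
      F t x r (a • (x - xt)) X - F t xt r (a • (x - xt)) Y ≤ θ (a * ‖x - xt‖ ^ 2 + ‖x - xt‖)

/-- `F` is uniformly continuous on the sets where `r`, `p` and `X` are bounded. -/
def UniformContinuousOnBounded (T : ℝ) (F : ParabolicOperator n) : Prop :=
  ∀ R > (0 : ℝ), ∀ δ > (0 : ℝ), ∃ η > (0 : ℝ), ∀ t t' x x' r r' p p'
    (X X' : Matrix (Fin n) (Fin n) ℝ), t ∈ Icc 0 T → t' ∈ Icc 0 T →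
    |r| ≤ R → |r'| ≤ R → ‖p‖ ≤ R → ‖p'‖ ≤ R → (∀ i j, |X i j| ≤ R) → (∀ i j, |X' i j| ≤ R) →
    |t - t'| < η → ‖x - x'‖ < η → |r - r'| < η → ‖p - p'‖ < η → (∀ i j, |X i j - X' i j| < η) →
    |F t x r p X - F t' x' r' p' X'| < δ

variable {T : ℝ} {F : ParabolicOperator n}

lemma UniformContinuousOnBounded.exists_abs_sub_lt (hF : UniformContinuousOnBounded T F) {R δ : ℝ}
    (hR : 0 < R) (hδ : 0 < δ) :
    ∃ η > 0, ∀ t ∈ Icc 0 T, ∀ t' ∈ Icc 0 T, ∀ x x' r p p' c (X : Matrix (Fin n) (Fin n) ℝ),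
      |r| ≤ R → ‖p‖ ≤ R → (∀ i j, |X i j| ≤ R) → |t - t'| < η → ‖x - x'‖ < η → ‖p - p'‖ < η →
      |c| < η → |F t x r p X - F t' x' r p' (X + c • 1)| < δ := by
  obtain ⟨η, hη, hunif⟩ := hF (R + 1) (by positivity) δ hδ
  refine ⟨min η 1, by positivity, fun t ht t' ht' x x' r p p' c X hr hp hX htt hxx hpp hc => ?_⟩
  rw [lt_min_iff] at htt hxx hpp hc
  have hdiff (i j : Fin n) : |X i j - (X + c • 1) i j| ≤ |c| := by
    rw [Matrix.add_apply, sub_add_cancel_left, abs_neg, Matrix.smul_apply, smul_eq_mul, abs_mul]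
    refine mul_le_of_le_one_right (abs_nonneg c) ?_
    rw [one_apply]
    split_ifs <;> simp
  have hX' (i j : Fin n) : |(X + c • 1) i j| ≤ R + 1 := by
    have := abs_sub_abs_le_abs_sub ((X + c • 1) i j) (X i j)
    rw [abs_sub_comm] at this
    linarith [hdiff i j, hX i j, hc.2]
  have hp' : ‖p'‖ ≤ R + 1 := by
    have := norm_sub_norm_le p' p
    rw [norm_sub_rev] at this
    linarith [hpp.2]
  exact hunif t t' x x' r r p p' X _ ht ht' (by linarith) (by linarith) (by linarith) hp'
    (fun i j => by linarith [hX i j]) hX' htt.1 hxx.1 (by simpa) hpp.1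
    fun i j => (hdiff i j).trans_lt hc.1

lemma UniformContinuousOnBounded.tendsto (hF : UniformContinuousOnBounded T F) {t : ℝ}
    (ht : t ∈ Icc 0 T) (x p : EuclideanSpace ℝ (Fin n)) (r : ℝ) (X : Matrix (Fin n) (Fin n) ℝ) :
    Tendsto (fun z : EuclideanSpace ℝ (Fin n) × EuclideanSpace ℝ (Fin n) => F t z.1 r z.2 X)
      (𝓝 (x, p)) (𝓝 (F t x r p X)) := by
  obtain ⟨B, hB⟩ := (finite_range fun ij : Fin n × Fin n => |X ij.1 ij.2|).bddAbove
  set R := max (max |r| ‖p‖) (max B 1)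
  rw [Metric.tendsto_nhds]
  intro δ hδ
  obtain ⟨η, hη, hunif⟩ := hF.exists_abs_sub_lt (R := R) (by simp [R]) hδ
  filter_upwards [Metric.ball_mem_nhds (x, p) hη] with z hz
  rw [← ball_prod_same, mem_prod, mem_ball_iff_norm', mem_ball_iff_norm'] at hz
  rw [dist_comm, Real.dist_eq]
  simpa using hunif t ht t ht x z.1 r p z.2 0 X (by simp [R]) (by simp [R])
    (fun i j => (hB (mem_range_self (i, j))).trans (by simp [R])) (by simpa) hz.1 hz.2 (by simpa)

lemma StructureCondition.apply_zero_le (hF : StructureCondition T F)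
    (hFuc : UniformContinuousOnBounded T F) {t a : ℝ} (ht : t ∈ Icc 0 T) (ha : 0 < a)
    {X Y : Matrix (Fin n) (Fin n) ℝ} (hXY : CrandallIshiiIneq a X Y)
    (x : EuclideanSpace ℝ (Fin n)) (r : ℝ) : F t x r 0 X ≤ F t x r 0 Y := by
  rcases isEmpty_or_nonempty (Fin n) with hn | hn
  · rw [Subsingleton.elim X Y]
  have : (𝓝[≠] x).NeBot := Module.punctured_nhds_neBot ℝ _ x
  obtain ⟨θ, -, hθ, hstruct⟩ := hF (|r| + 1) (by positivity)
  have hp : Tendsto (fun xt => a • (x - xt)) (𝓝[≠] x) (𝓝 0) :=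
    ((by fun_prop : Continuous fun xt => a • (x - xt)).tendsto' x 0 (by simp)).mono_left
      nhdsWithin_le_nhds
  have hmod : Tendsto (fun xt => θ (a * ‖x - xt‖ ^ 2 + ‖x - xt‖)) (𝓝[≠] x) (𝓝 0) := by
    refine hθ.comp (tendsto_nhdsWithin_iff.2 ⟨?_, ?_⟩)
    · exact ((by fun_prop : Continuous fun xt => a * ‖x - xt‖ ^ 2 + ‖x - xt‖).tendsto' x 0
        (by simp)).mono_left nhdsWithin_le_nhds
    · filter_upwards [self_mem_nhdsWithin] with xt hxt
      have := norm_pos_iff.2 (sub_ne_zero.2 (Ne.symm hxt))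
      exact mem_Ioi.2 (by positivity)
  have hX := (hFuc.tendsto ht x 0 r X).comp (tendsto_const_nhds.prodMk_nhds hp)
  have hY := (hFuc.tendsto ht x 0 r Y).comp
    ((tendsto_id'.2 nhdsWithin_le_nhds : Tendsto id (𝓝[≠] x) (𝓝 x)).prodMk_nhds hp)
  refine sub_nonpos.1 (le_of_tendsto_of_tendsto' (hX.sub hY) hmod fun xt => ?_)
  exact hstruct t ht x xt r a X Y (by linarith) ha hXY

lemma StructureCondition.exists_sub_le (hF : StructureCondition T F)
    (hFuc : UniformContinuousOnBounded T F) {R ε : ℝ} (hR : 0 < R) (hε : 0 < ε) :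
    ∃ δ > 0, ∀ t ∈ Icc 0 T, ∀ (x xt : EuclideanSpace ℝ (Fin n)) (r a : ℝ)
      (X Y : Matrix (Fin n) (Fin n) ℝ), |r| ≤ R → 0 < a → CrandallIshiiIneq a X Y →
      a * ‖x - xt‖ ^ 2 + ‖x - xt‖ < δ →
      F t x r (a • (x - xt)) X - F t xt r (a • (x - xt)) Y ≤ ε := by
  obtain ⟨θ, -, hθ, hstruct⟩ := hF R hR
  obtain ⟨δ, hδ, hsmall⟩ := mem_nhdsGT_iff_exists_Ioo_subset.1 (hθ.eventually (ge_mem_nhds hε))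
  refine ⟨δ, hδ, fun t ht x xt r a X Y hr ha hXY hlt => ?_⟩
  rcases eq_or_ne x xt with rfl | hne
  · have := hF.apply_zero_le hFuc ht ha hXY x r
    rw [sub_self, smul_zero]
    linarith
  · have := norm_pos_iff.2 (sub_ne_zero.2 hne)
    exact (hstruct t ht x xt r a X Y hr ha hXY).trans (hsmall ⟨by positivity, hlt⟩)

end StructureCondition

lemma exists_forall_sub_mul_lt {X : Type*} [MetricSpace X] [ProperSpace X] {K : Set X}
    {f ψ : X → ℝ} {m : ℝ} (hf : UpperSemicontinuousOn f K) (hK : IsClosed K)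
    (hbdd : Bornology.IsBounded {x ∈ K | m ≤ f x}) (hψ : Continuous ψ) (hψ₀ : ∀ x, 0 ≤ ψ x)
    (hlt : ∀ x ∈ K, ψ x = 0 → f x < m) : ∃ b ≥ 0, ∀ x ∈ K, f x - b * ψ x < m := by
  have hcompact := isCompact_superlevel hf hK hbdd
  rcases {x ∈ K | m ≤ f x}.eq_empty_or_nonempty with hempty | hne
  · refine ⟨0, le_rfl, fun x hx => ?_⟩
    rw [zero_mul, sub_zero]
    exact not_le.1 fun h => hempty.subset ⟨hx, h⟩
  obtain ⟨x₁, hx₁, hmax⟩ :=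
    UpperSemicontinuousOn.exists_isMaxOn hne hcompact (hf.mono (sep_subset _ _))
  obtain ⟨x₂, hx₂, hmin⟩ := hcompact.exists_isMinOn hne hψ.continuousOn
  have hpos : 0 < ψ x₂ := (hψ₀ x₂).lt_of_ne' fun h => (hlt x₂ hx₂.1 h).not_ge hx₂.2
  have hb : 0 ≤ (f x₁ - m) / ψ x₂ + 1 := by have := sub_nonneg.2 hx₁.2; positivity
  refine ⟨_, hb, fun x hx => ?_⟩
  rcases lt_or_ge (f x) m with h | h
  · linarith [mul_nonneg hb (hψ₀ x)]
  · have hle : f x ≤ f x₁ := hmax ⟨hx, h⟩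
    have hψle : ψ x₂ ≤ ψ x := hmin ⟨hx, h⟩
    have := mul_le_mul_of_nonneg_left hψle hb
    rw [add_mul, div_mul_cancel₀ _ hpos.ne'] at this
    linarith

section DoubledSupremum

variable {T C : ℝ} {F : ParabolicOperator n} {u v : ℝ × EuclideanSpace ℝ (Fin n) → ℝ}

/-- The supremum of the doubled-variable functional `u(t, x) - v(t, y) - a/2 |x - y|²` over
`[0, T] × ℝⁿ × ℝⁿ`, which serves as the modulus `l(a)` once it is positive. -/
noncomputable def doubledSup (T : ℝ) (u v : ℝ × EuclideanSpace ℝ (Fin n) → ℝ) (a : ℝ) : ℝ :=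
  ⨆ z : Icc 0 T × EuclideanSpace ℝ (Fin n) × EuclideanSpace ℝ (Fin n),
    u (z.1, z.2.1) - v (z.1, z.2.2) - a / 2 * ‖z.2.1 - z.2.2‖ ^ 2

namespace IsSubSupersolutionPair

lemma sub_le (h : IsSubSupersolutionPair T F C u v) (p q : ℝ × EuclideanSpace ℝ (Fin n)) :
    u p - v q ≤ 2 * C := by
  linarith [(abs_le.1 (h.abs_le_left p)).2, (abs_le.1 (h.abs_le_right q)).1]

lemma le_doubledSup (h : IsSubSupersolutionPair T F C u v) {a t : ℝ} (ha : 0 ≤ a)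
    (ht : t ∈ Icc 0 T) (x y : EuclideanSpace ℝ (Fin n)) :
    u (t, x) - v (t, y) - a / 2 * ‖x - y‖ ^ 2 ≤ doubledSup T u v a := by
  refine le_ciSup (f := fun z : Icc 0 T × EuclideanSpace ℝ (Fin n) × EuclideanSpace ℝ (Fin n) =>
    u (z.1, z.2.1) - v (z.1, z.2.2) - a / 2 * ‖z.2.1 - z.2.2‖ ^ 2)
    ⟨2 * C, forall_mem_range.2 fun z => ?_⟩ (⟨t, ht⟩, x, y)
  have : 0 ≤ a / 2 * ‖z.2.1 - z.2.2‖ ^ 2 := by positivity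
  linarith [h.sub_le (z.1, z.2.1) (z.1, z.2.2)]

lemma antitoneOn_doubledSup (h : IsSubSupersolutionPair T F C u v) (hT : 0 ≤ T) :
    AntitoneOn (doubledSup T u v) (Ici 0) := by
  intro a ha b _ hab
  have : Nonempty (Icc 0 T) := ⟨⟨0, le_rfl, hT⟩⟩
  refine ciSup_le fun z => le_trans ?_ (h.le_doubledSup ha z.1.2 z.2.1 z.2.2)
  gcongr

end IsSubSupersolutionPair

lemma exists_lt_of_lt_doubledSup {a m : ℝ} (hT : 0 ≤ T) (hm : m < doubledSup T u v a) :
    ∃ t ∈ Icc 0 T, ∃ x y, m < u (t, x) - v (t, y) - a / 2 * ‖x - y‖ ^ 2 := by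
  have : Nonempty (Icc 0 T) := ⟨⟨0, le_rfl, hT⟩⟩
  obtain ⟨⟨t, x, y⟩, hz⟩ := exists_lt_of_lt_ciSup hm
  exact ⟨t, t.2, x, y, hz⟩

lemma eventually_le_add_of_antitoneOn {M : ℝ → ℝ} (hM : AntitoneOn M (Ici 0)) {m η : ℝ}
    (hm : ∀ a > 0, m ≤ M a) (hη : 0 < η) : ∀ᶠ a in atTop, M (a / 2) ≤ M a + η := by
  have hne : (M '' Ioi 0).Nonempty := nonempty_Ioi.image M
  obtain ⟨_, ⟨a₀, ha₀, rfl⟩, hlt⟩ := exists_lt_of_csInf_lt hne (lt_add_of_pos_right _ hη)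
  have hbdd : BddBelow (M '' Ioi 0) := ⟨m, forall_mem_image.2 hm⟩
  filter_upwards [eventually_ge_atTop (2 * a₀)] with a ha
  rw [mem_Ioi] at ha₀
  have ha_pos : 0 < a := by linarith
  have hinf : sInf (M '' Ioi 0) ≤ M a := csInf_le hbdd (mem_image_of_mem M ha_pos)
  have hle : M (a / 2) ≤ M a₀ := hM ha₀.le (half_pos ha_pos).le (by linarith)
  linarith

end DoubledSupremum

section Doubling

variable {T C a c η m : ℝ} {F : ParabolicOperator n} {u v : ℝ × EuclideanSpace ℝ (Fin n) → ℝ}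

lemma upperSemicontinuousOn_sub_sub {X Y : Type*} [TopologicalSpace X] [TopologicalSpace Y]
    {s : Set X} {t : Set Y} {f : X → ℝ} {g : Y → ℝ} {φ : X × Y → ℝ}
    (hf : UpperSemicontinuousOn f s) (hg : LowerSemicontinuousOn g t) (hφ : Continuous φ) :
    UpperSemicontinuousOn (fun z : X × Y => f z.1 - g z.2 - φ z) (s ×ˢ t) := by
  simp only [sub_eq_add_neg]
  exact ((hf.comp continuousOn_fst fun _ hz => hz.1).add
    (hg.neg.comp continuousOn_snd fun _ hz => hz.2)).add hφ.neg.continuousOn.upperSemicontinuousOn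

namespace IsSubSupersolutionPair

lemma eventually_near_diagonal (h : IsSubSupersolutionPair T F C u v) (hT : 0 ≤ T)
    (hinit : ∀ ε > 0, ∃ δ > 0, ∀ x y, ‖x - y‖ < δ → u (0, x) - v (0, y) ≤ ε) {μ : ℝ} (hμ : 0 < μ)
    (hM : ∀ a > 0, μ < doubledSup T u v a) (hη : 0 < η) :
    ∀ᶠ a in atTop, ∃ ε > 0, ∀ t ∈ Icc 0 T, ∀ x y,
      doubledSup T u v a - ε ≤ u (t, x) - v (t, y) - a / 2 * ‖x - y‖ ^ 2 →
        0 < t ∧ a * ‖x - y‖ ^ 2 + ‖x - y‖ < η := by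
  obtain ⟨δ, hδ, hδinit⟩ := hinit (μ / 2) (half_pos hμ)
  obtain ⟨ε, hε, hεle⟩ : ∃ ε > 0, ε ≤ min (μ / 2) (η / 16) := ⟨_, by positivity, le_rfl⟩
  obtain ⟨ρ, hρ, hρle⟩ : ∃ ρ > 0, ρ ≤ min δ (η / 2) := ⟨_, by positivity, le_rfl⟩
  rw [le_min_iff] at hεle hρle
  filter_upwards [eventually_le_add_of_antitoneOn (h.antitoneOn_doubledSup hT)
    (fun a ha => (hM a ha).le) hε, eventually_gt_atTop 0, eventually_gt_atTop (8 * ε / ρ ^ 2)]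
    with a hhalf ha hlarge
  refine ⟨ε, hε, fun t ht x y hmax => ?_⟩
  have hsq : a * ‖x - y‖ ^ 2 ≤ 8 * ε := by
    linarith [h.le_doubledSup (half_pos ha).le ht x y]
  have hdist : ‖x - y‖ < ρ := by
    rw [div_lt_iff₀ (by positivity)] at hlarge
    exact lt_of_pow_lt_pow_left₀ 2 hρ.le (lt_of_mul_lt_mul_left (hsq.trans_lt hlarge) ha.le)
  refine ⟨ht.1.lt_of_ne fun h₀ => ?_, by linarith⟩
  subst h₀
  have := hδinit x y (hdist.trans_le hρle.1)
  have : 0 ≤ a / 2 * ‖x - y‖ ^ 2 := by positivity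
  linarith [hM a ha]

lemma isBounded_superlevel (h : IsSubSupersolutionPair T F C u v) (ha : 0 ≤ a) (hc : 0 < c)
    (r₁ r₂ : ℝ × EuclideanSpace ℝ (Fin n)) (m : ℝ) : Bornology.IsBounded
      {z ∈ (Icc 0 T ×ˢ univ) ×ˢ (Icc 0 T ×ˢ univ) | m ≤ u z.1 - v z.2
        - (a / 2 * ‖z.1.2 - z.2.2‖ ^ 2 + c * ‖z.1.2 - r₁.2‖ ^ 2 + c * ‖z.2.2 - r₂.2‖ ^ 2)} := by
  have hball (r : ℝ × EuclideanSpace ℝ (Fin n)) := (Metric.isBounded_Icc 0 T).prod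
    (Metric.isBounded_closedBall (x := r.2) (r := √((2 * C - m) / c)))
  refine ((hball r₁).prod (hball r₂)).subset ?_
  rintro z ⟨hzT, hm⟩
  have hsub := h.sub_le z.1 z.2
  have hd : 0 ≤ a / 2 * ‖z.1.2 - z.2.2‖ ^ 2 := by positivity
  have hd₁ : 0 ≤ c * ‖z.1.2 - r₁.2‖ ^ 2 := by positivity
  have hd₂ : 0 ≤ c * ‖z.2.2 - r₂.2‖ ^ 2 := by positivity
  have hle {x y : EuclideanSpace ℝ (Fin n)} (hxy : c * ‖x - y‖ ^ 2 ≤ 2 * C - m) :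
      x ∈ Metric.closedBall y √((2 * C - m) / c) :=
    mem_closedBall_iff_norm.2 (Real.le_sqrt_of_sq_le ((le_div_iff₀' hc).2 hxy))
  exact ⟨⟨hzT.1.1, hle (by linarith)⟩, ⟨hzT.2.1, hle (by linarith)⟩⟩

lemma exists_time_penalization (h : IsSubSupersolutionPair T F C u v) (ha : 0 ≤ a) (hc : 0 < c)
    {σ : ℝ} (hdiag : ∀ t ∈ Icc 0 T, ∀ x y, m ≤ u (t, x) - v (t, y) - a / 2 * ‖x - y‖ ^ 2 →
      0 < t ∧ a * ‖x - y‖ ^ 2 + ‖x - y‖ < η) (hσ : 0 < σ)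
    (r₁ r₂ : ℝ × EuclideanSpace ℝ (Fin n)) :
    ∃ b ≥ 0, ∀ q₁ ∈ Icc 0 T ×ˢ univ, ∀ q₂ ∈ Icc 0 T ×ˢ univ,
      m ≤ u q₁ - v q₂ - (a / 2 * ‖q₁.2 - q₂.2‖ ^ 2 + c * ‖q₁.2 - r₁.2‖ ^ 2
        + c * ‖q₂.2 - r₂.2‖ ^ 2) - b * (q₁.1 - q₂.1) ^ 2 →
      0 < q₁.1 ∧ 0 < q₂.1 ∧ |q₁.1 - q₂.1| < σ ∧
        a * ‖q₁.2 - q₂.2‖ ^ 2 + ‖q₁.2 - q₂.2‖ < η := by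
  set good : Set ((ℝ × EuclideanSpace ℝ (Fin n)) × ℝ × EuclideanSpace ℝ (Fin n)) :=
    {z | 0 < z.1.1 ∧ 0 < z.2.1 ∧ |z.1.1 - z.2.1| < σ ∧
      a * ‖z.1.2 - z.2.2‖ ^ 2 + ‖z.1.2 - z.2.2‖ < η}
  have hgood : IsOpen good := by
    refine .and ?_ (.and ?_ (.and ?_ ?_)) <;> exact isOpen_lt (by fun_prop) (by fun_prop)
  have hK : IsClosed (Icc (0 : ℝ) T ×ˢ (univ : Set (EuclideanSpace ℝ (Fin n)))) :=
    isClosed_Icc.prod isClosed_univ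
  set φ : (ℝ × EuclideanSpace ℝ (Fin n)) × ℝ × EuclideanSpace ℝ (Fin n) → ℝ := fun z =>
    a / 2 * ‖z.1.2 - z.2.2‖ ^ 2 + c * ‖z.1.2 - r₁.2‖ ^ 2 + c * ‖z.2.2 - r₂.2‖ ^ 2
  have hzero : ∀ z ∈ ((Icc 0 T ×ˢ univ) ×ˢ (Icc 0 T ×ˢ univ)) ∩ goodᶜ,
      (z.1.1 - z.2.1) ^ 2 = 0 → u z.1 - v z.2 - φ z < m := by
    rintro ⟨⟨t, x⟩, ⟨s, y⟩⟩ ⟨⟨hx, hy⟩, hz⟩ hts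
    obtain rfl : t = s := sub_eq_zero.1 (pow_eq_zero_iff two_ne_zero |>.1 hts)
    by_contra! hm
    have hd₁ : 0 ≤ c * ‖x - r₁.2‖ ^ 2 := by positivity
    have hd₂ : 0 ≤ c * ‖y - r₂.2‖ ^ 2 := by positivity
    obtain ⟨ht, hxy⟩ := hdiag t hx.1 x y (by dsimp only [φ] at hm; linarith)
    exact hz ⟨ht, ht, by simpa using hσ, hxy⟩
  obtain ⟨b, hb, hlt⟩ := exists_forall_sub_mul_lt
    ((upperSemicontinuousOn_sub_sub h.usc h.lsc (by fun_prop)).mono inter_subset_left)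
    ((hK.prod hK).inter hgood.isClosed_compl)
    ((h.isBounded_superlevel ha hc r₁ r₂ m).subset fun z hz => ⟨hz.1.1, hz.2⟩)
    (by fun_prop) (fun z => sq_nonneg _) hzero
  refine ⟨b, hb, fun q₁ hq₁ q₂ hq₂ hm => ?_⟩
  by_contra hq
  exact (hlt (q₁, q₂) ⟨⟨hq₁, hq₂⟩, hq⟩).not_ge hm

end IsSubSupersolutionPair

lemma exists_pos_forall_mul_le (B : ℝ) {σ : ℝ} (hσ : 0 < σ) :
    ∃ c > 0, c ≤ σ ∧ ∀ d, c * d ^ 2 ≤ B → c * d ≤ σ := by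
  refine ⟨min σ (σ ^ 2 / (|B| + 1)), by positivity, min_le_left _ _, fun d hd => ?_⟩
  set c := min σ (σ ^ 2 / (|B| + 1))
  have : 0 < c := by positivity
  have hcB : c * (|B| + 1) ≤ σ ^ 2 := (le_div_iff₀ (by positivity)).1 (min_le_right _ _)
  refine (le_abs_self _).trans (abs_le_of_sq_le_sq ?_ hσ.le)
  calc (c * d) ^ 2 = c * (c * d ^ 2) := by ring
    _ ≤ c * (|B| + 1) := by gcongr; linarith [le_abs_self B]
    _ ≤ σ ^ 2 := hcB

theorem IsSubSupersolutionPair.exists_doubling_near_diagonal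
    (h : IsSubSupersolutionPair T F C u v) (hT : 0 ≤ T) (ha : 0 ≤ a) {σ : ℝ} (hσ : 0 < σ)
    (hdiag : ∀ t ∈ Icc 0 T, ∀ x y,
      doubledSup T u v a - 2 * σ ≤ u (t, x) - v (t, y) - a / 2 * ‖x - y‖ ^ 2 →
      0 < t ∧ a * ‖x - y‖ ^ 2 + ‖x - y‖ < η) :
    ∃ c ∈ Ioc 0 σ, ∃ q₁ ∈ Icc 0 T ×ˢ univ, ∃ q₂ ∈ Icc 0 T ×ˢ univ, ∃ g₁ g₂,
      ∃ X Y : Matrix (Fin n) (Fin n) ℝ,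
      doubledSup T u v a - 2 * σ ≤ u q₁ - v q₂ ∧ |q₁.1 - q₂.1| < σ ∧
      a * ‖q₁.2 - q₂.2‖ ^ 2 + ‖q₁.2 - q₂.2‖ < η ∧
      ‖g₁ - a • (q₁.2 - q₂.2)‖ ≤ 3 * σ ∧ ‖g₂ - a • (q₁.2 - q₂.2)‖ ≤ 3 * σ ∧
      X.IsSymm ∧ Y.IsSymm ∧ CrandallIshiiIneq (a + c / 3) X Y ∧
      -(2 * c) ≤ F q₁.1 q₁.2 (u q₁) g₁ (X + (5 * c) • 1)
        - F q₂.1 q₂.2 (v q₂) g₂ (Y - (5 * c) • 1) := by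
  set M := doubledSup T u v a
  obtain ⟨c, hc, hcσ, hcB⟩ := exists_pos_forall_mul_le (2 * C - M + 2 * σ) hσ
  obtain ⟨t, ht, x, y, hxy⟩ := exists_lt_of_lt_doubledSup hT (sub_lt_self M hc)
  obtain ⟨b, hb, hnear⟩ := h.exists_time_penalization ha hc (m := M - 2 * c)
    (fun t ht x y hm => hdiag t ht x y (by linarith)) hσ (t, x) (t, y)
  obtain ⟨q₁, hq₁, q₂, hq₂, g₁, g₂, X, Y, hmax, hg₁, hg₂, hX, hY, hXY, hF⟩ :=
    h.exists_viscosity_doubling ha (mul_nonneg two_pos.le hb) hc (r₁ := (t, x)) (r₂ := (t, y))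
      ⟨ht, mem_univ _⟩ ⟨ht, mem_univ _⟩
  simp only [spaceTimeForm_self, Prod.fst_sub, Prod.snd_sub, sub_self] at hmax hg₁ hg₂
  obtain ⟨h₁, h₂, htime, hspace⟩ := hnear q₁ hq₁ q₂ hq₂ (by linarith)
  have hsub := h.sub_le q₁ q₂
  have hd : 0 ≤ a / 2 * ‖q₁.2 - q₂.2‖ ^ 2 := by positivity
  have hτ : 0 ≤ b * (q₁.1 - q₂.1) ^ 2 := by positivity
  have hd₁ : 0 ≤ c * ‖q₁.2 - x‖ ^ 2 := by positivity
  have hd₂ : 0 ≤ c * ‖q₂.2 - y‖ ^ 2 := by positivity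
  have hcd₁ := hcB ‖q₁.2 - x‖ (by linarith)
  have hcd₂ := hcB ‖q₂.2 - y‖ (by linarith)
  exact ⟨c, ⟨hc, hcσ⟩, q₁, hq₁, q₂, hq₂, g₁, g₂, X, Y, by linarith, htime, hspace,
    by linarith, by linarith, hX, hY, hXY, hF h₁ h₂⟩

lemma UniformContinuousOnBounded.exists_abs_sub_lt_of_near_smul
    (hF : UniformContinuousOnBounded T F) (hC : 0 ≤ C) (ha : 0 < a) (hη : 0 < η) {δ : ℝ}
    (hδ : 0 < δ) :
    ∃ ρ > 0, ρ ≤ a ∧ ∀ c ∈ Ioc 0 ρ, ∀ t ∈ Icc 0 T, ∀ t' ∈ Icc 0 T, ∀ x r d g e,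
      ∀ X : Matrix (Fin n) (Fin n) ℝ, |r| ≤ C → ‖d‖ ≤ η → (∀ i j, |X i j| ≤ 3 * (a + c / 3)) →
      |t - t'| < ρ → ‖g - a • d‖ ≤ 3 * ρ → |e| ≤ 5 * ρ →
      |F t x r ((a + c / 3) • d) X - F t' x r g (X + e • 1)| < δ := by
  have haη : 0 < a * η := by positivity
  obtain ⟨η', hη', hunif⟩ := hF.exists_abs_sub_lt (R := C + 4 * a + 2 * (a * η)) (by positivity) hδ
  obtain ⟨ρ, hρ, hρle⟩ : ∃ ρ > 0, ρ ≤ min a (η' / (6 + η)) := ⟨_, by positivity, le_rfl⟩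
  rw [le_min_iff, le_div_iff₀ (by positivity), mul_add] at hρle
  have hρη : 0 < ρ * η := by positivity
  refine ⟨ρ, hρ, hρle.1, fun c ⟨hc, hcρ⟩ t ht t' ht' x r d g e X hr hd hX htt hg he => ?_⟩
  have hcd : c / 3 * ‖d‖ ≤ ρ * η := by gcongr; linarith
  have hp : ‖(a + c / 3) • d‖ ≤ 2 * a * η := by
    rw [norm_smul, Real.norm_of_nonneg (by positivity)]
    gcongr
    linarith
  have hdist : ‖(a + c / 3) • d - g‖ ≤ ρ * η + 3 * ρ := by
    calc ‖(a + c / 3) • d - g‖ = ‖(c / 3) • d - (g - a • d)‖ := by congr 1; module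
      _ ≤ ‖(c / 3) • d‖ + ‖g - a • d‖ := norm_sub_le _ _
      _ ≤ ρ * η + 3 * ρ := by rw [norm_smul, Real.norm_of_nonneg (by positivity)]; gcongr
  exact hunif t ht t' ht' x x r _ g e X (by linarith) (by linarith)
    (fun i j => by linarith [hX i j]) (by linarith) (by simpa) (by linarith) (by linarith)

theorem IsSubSupersolutionPair.exists_sub_le_near_diagonal
    (h : IsSubSupersolutionPair T F C u v) (hF : UniformContinuousOnBounded T F) (hT : 0 ≤ T)
    (ha : 0 < a) {δ ε : ℝ} (hδ : 0 < δ) (hε : 0 < ε) (hη : 0 < η)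
    (hdiag : ∀ t ∈ Icc 0 T, ∀ x y,
      doubledSup T u v a - ε ≤ u (t, x) - v (t, y) - a / 2 * ‖x - y‖ ^ 2 →
      0 < t ∧ a * ‖x - y‖ ^ 2 + ‖x - y‖ < η) :
    ∃ t ∈ Icc 0 T, ∃ x y r s, ∃ a' > 0, ∃ X Y : Matrix (Fin n) (Fin n) ℝ,
      |r| ≤ C ∧ doubledSup T u v a - δ ≤ r - s ∧
      a' * ‖x - y‖ ^ 2 + ‖x - y‖ < 2 * η ∧ CrandallIshiiIneq a' X Y ∧
      -δ ≤ F t x r (a' • (x - y)) X - F t y s (a' • (x - y)) Y := by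
  have hC : 0 ≤ C := (abs_nonneg _).trans (h.abs_le_left 0)
  obtain ⟨ρ, hρ, hρa, hunif⟩ :=
    hF.exists_abs_sub_lt_of_near_smul hC ha hη (show 0 < δ / 4 by positivity)
  obtain ⟨σ, hσ, hσle⟩ : ∃ σ > 0, σ ≤ min ρ (min (ε / 2) (δ / 4)) := ⟨_, by positivity, le_rfl⟩
  simp only [le_min_iff] at hσle
  obtain ⟨hσρ, hσε, hσδ⟩ := hσle
  obtain ⟨c, ⟨hc, hcσ⟩, q₁, hq₁, q₂, hq₂, g₁, g₂, X, Y, hM, htime, hspace, hg₁, hg₂, hX, hY,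
    hXY, heq⟩ := h.exists_doubling_near_diagonal hT ha.le hσ fun t ht x y hm =>
      hdiag t ht x y (by linarith)
  have hcsq : c / 3 * ‖q₁.2 - q₂.2‖ ^ 2 ≤ a * ‖q₁.2 - q₂.2‖ ^ 2 := by gcongr; linarith
  have hsq : 0 ≤ a * ‖q₁.2 - q₂.2‖ ^ 2 := by positivity
  have hd : ‖q₁.2 - q₂.2‖ ≤ η := by linarith
  have hcabs : |5 * c| ≤ 5 * ρ := by rw [abs_of_pos (by positivity)]; linarith
  have hF₁ := hunif c ⟨hc, by linarith⟩ q₁.1 hq₁.1 q₁.1 hq₁.1 q₁.2 (u q₁) _ g₁ (5 * c) X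
    (h.abs_le_left q₁) hd (hXY.abs_apply_le hX) (by simpa) (by linarith) hcabs
  have hF₂ := hunif c ⟨hc, by linarith⟩ q₁.1 hq₁.1 q₂.1 hq₂.1 q₂.2 (v q₂) _ g₂ (-(5 * c)) Y
    (h.abs_le_right q₂) hd (by simpa using hXY.neg_swap.abs_apply_le hY.neg)
    (by linarith) (by linarith) (by rwa [abs_neg])
  rw [neg_smul, ← sub_eq_add_neg] at hF₂
  refine ⟨q₁.1, hq₁.1, q₁.2, q₂.2, u q₁, v q₂, a + c / 3, by positivity, X, Y, h.abs_le_left q₁,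
    by linarith, by linarith [norm_nonneg (q₁.2 - q₂.2)], hXY, ?_⟩
  linarith [(abs_lt.1 hF₁).1, (abs_lt.1 hF₂).2]

end Doubling

section Comparison

variable {T C γ : ℝ} {F : ParabolicOperator n} {u v : ℝ × EuclideanSpace ℝ (Fin n) → ℝ}

lemma IsSubSupersolutionPair.exists_doubledSup_le (h : IsSubSupersolutionPair T F C u v)
    (hT : 0 ≤ T) (hγ : 0 < γ)
    (hproper : ∀ t x p X r s, s ≤ r → γ * (r - s) ≤ F t x s p X - F t x r p X)
    (hF : StructureCondition T F) (hFuc : UniformContinuousOnBounded T F)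
    (hinit : ∀ ε > 0, ∃ δ > 0, ∀ x y, ‖x - y‖ < δ → u (0, x) - v (0, y) ≤ ε) {μ : ℝ}
    (hμ : 0 < μ) : ∃ a > 0, doubledSup T u v a ≤ μ := by
  have hC : 0 ≤ C := (abs_nonneg _).trans (h.abs_le_left 0)
  by_contra! hM
  obtain ⟨η, hη, hstruct⟩ := hF.exists_sub_le hFuc (R := C + 1) (by positivity)
    (show 0 < γ * μ / 4 by positivity)
  obtain ⟨a, ⟨ε, hε, hdiag⟩, ha⟩ :=
    ((h.eventually_near_diagonal hT hinit hμ hM (half_pos hη)).and (eventually_gt_atTop 0)).exists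
  obtain ⟨δ, hδ, hδle⟩ : ∃ δ > 0, δ ≤ min (μ / 2) (γ * μ / 8) := ⟨_, by positivity, le_rfl⟩
  rw [le_min_iff] at hδle
  obtain ⟨t, ht, x, y, r, s, a', ha', X, Y, hr, hrs, hxy, hXY, heq⟩ :=
    h.exists_sub_le_near_diagonal hFuc hT ha hδ hε (half_pos hη) hdiag
  have hgap : μ / 2 ≤ r - s := by linarith [hM a ha]
  have hprop := hproper t y (a' • (x - y)) Y r s (by linarith)
  have hstr := hstruct t ht x y r a' X Y (by linarith) ha' hXY (by linarith)
  linarith [mul_le_mul_of_nonneg_left hgap hγ.le, mul_pos hγ hμ]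

lemma IsSubSupersolutionPair.tendsto_max_doubledSup (h : IsSubSupersolutionPair T F C u v)
    (hT : 0 ≤ T) (hγ : 0 < γ)
    (hproper : ∀ t x p X r s, s ≤ r → γ * (r - s) ≤ F t x s p X - F t x r p X)
    (hF : StructureCondition T F) (hFuc : UniformContinuousOnBounded T F)
    (hinit : ∀ ε > 0, ∃ δ > 0, ∀ x y, ‖x - y‖ < δ → u (0, x) - v (0, y) ≤ ε) :
    Tendsto (fun a => max 0 (doubledSup T u v a)) atTop (𝓝 0) := by
  rw [Metric.tendsto_nhds]
  intro ε hε
  obtain ⟨a, ha, hle⟩ := h.exists_doubledSup_le hT hγ hproper hF hFuc hinit (half_pos hε)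
  filter_upwards [eventually_ge_atTop a] with b hb
  rw [Real.dist_0_eq_abs, abs_of_nonneg (le_max_left _ _)]
  have := h.antitoneOn_doubledSup hT ha.le (ha.le.trans hb) hb
  exact max_lt hε (by linarith)

end Comparison

lemma exists_forall_sub_le_of_uniformContinuous {E : Type*} [SeminormedAddCommGroup E] {f g : E → ℝ}
    (hf : UniformContinuous f) (hfg : ∀ x, f x ≤ g x) :
    ∀ ε > 0, ∃ δ > 0, ∀ x y, ‖x - y‖ < δ → f x - g y ≤ ε := by
  intro ε hε
  obtain ⟨δ, hδ, hclose⟩ := Metric.uniformContinuous_iff.1 hf ε hε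
  refine ⟨δ, hδ, fun x y hxy => ?_⟩
  have := (abs_lt.1 (hclose ((dist_eq_norm x y).trans_lt hxy))).2
  linarith [hfg y]

theorem stmt15_general {T C γ : ℝ} {F : ParabolicOperator n}
    {u v : ℝ × EuclideanSpace ℝ (Fin n) → ℝ} (h : IsSubSupersolutionPair T F C u v) (hT : 0 ≤ T)
    (hγ : 0 < γ) (hproper : ∀ t x p X r s, s ≤ r → γ * (r - s) ≤ F t x s p X - F t x r p X)
    (hF : StructureCondition T F) (hFuc : UniformContinuousOnBounded T F)
    (hinit : ∀ ε > 0, ∃ δ > 0, ∀ x y, ‖x - y‖ < δ → u (0, x) - v (0, y) ≤ ε) :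
    ∃ l : ℝ → ℝ, Tendsto l atTop (𝓝 0) ∧ ∀ t ∈ Icc 0 T, ∀ x y, ∀ α > (0 : ℝ),
      u (t, x) - v (t, y) ≤ α / 2 * ‖x - y‖ ^ 2 + l α := by
  refine ⟨_, h.tendsto_max_doubledSup hT hγ hproper hF hFuc hinit, fun t ht x y α hα => ?_⟩
  linarith [h.le_doubledSup hα.le ht x y, le_max_right 0 (doubledSup T u v α)]

/-- parabolic comparison / key estimate. Under the structural
assumptions on `F` (properness with `γ > 0`, degenerate ellipticity, the
condition (3.14) with modulus `θ_R`, and uniform continuity on sets where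
`(u,p,X)` stay bounded), if `u` is a bounded USC subsolution and `v` a bounded
LSC supersolution of `∂ₜ - F = 0` on `(0,T]×ℝⁿ` with `u(0,·) ≤ v(0,·)` both
`BUC(ℝⁿ)`, then `u(t,x) - v(t,y) ≤ inf_{α>0} [α/2 |x-y|² + l(α)]` where
`l(α) → 0` as `α → ∞`. -/
theorem stmt15 (T : ℝ) (hT : 0 < T)
    (F : ℝ → EuclideanSpace ℝ (Fin n) → ℝ → EuclideanSpace ℝ (Fin n) →
      Matrix (Fin n) (Fin n) ℝ → ℝ)
    (hFcont : Continuous (fun q : ℝ × EuclideanSpace ℝ (Fin n) × ℝ ×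
      EuclideanSpace ℝ (Fin n) × Matrix (Fin n) (Fin n) ℝ =>
        F q.1 q.2.1 q.2.2.1 q.2.2.2.1 q.2.2.2.2))
    (hFell : ∀ t x r p (X Y : Matrix (Fin n) (Fin n) ℝ), (Y - X).PosSemidef →
      F t x r p X ≤ F t x r p Y)
    (γ : ℝ) (hγ : 0 < γ)
    (hFproper : ∀ t x p X r s, s ≤ r → γ * (r - s) ≤ F t x s p X - F t x r p X)
    -- structural condition (3.14) of the User's Guide, with modulus `θ_R`:
    (hFstruct : ∀ R > (0:ℝ), ∃ θ : ℝ → ℝ, (∀ s, 0 ≤ θ s) ∧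
      Tendsto θ (nhdsWithin 0 (Set.Ioi 0)) (nhds 0) ∧
      ∀ t ∈ Set.Icc 0 T, ∀ (x xt : EuclideanSpace ℝ (Fin n)) (r a : ℝ)
        (X Y : Matrix (Fin n) (Fin n) ℝ), |r| ≤ R → 0 < a →
        (∀ ξ η : Fin n → ℝ,
          -(3 * a) * ((∑ i, ξ i ^ 2) + ∑ i, η i ^ 2)
              ≤ ξ ⬝ᵥ X.mulVec ξ - η ⬝ᵥ Y.mulVec η ∧
          ξ ⬝ᵥ X.mulVec ξ - η ⬝ᵥ Y.mulVec η ≤ 3 * a * ∑ i, (ξ i - η i) ^ 2) →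
        F t x r (a • (x - xt)) X - F t xt r (a • (x - xt)) Y
          ≤ θ (a * ‖x - xt‖ ^ 2 + ‖x - xt‖))
    -- uniform continuity of `F` on sets where `(u,p,X)` remain bounded:
    (hFuc : ∀ R > (0:ℝ), ∀ δ > (0:ℝ), ∃ η > (0:ℝ), ∀ t t' x x' r r' p p'
      (X X' : Matrix (Fin n) (Fin n) ℝ),
      t ∈ Set.Icc 0 T → t' ∈ Set.Icc 0 T →
      |r| ≤ R → |r'| ≤ R → ‖p‖ ≤ R → ‖p'‖ ≤ R →
      (∀ i j, |X i j| ≤ R) → (∀ i j, |X' i j| ≤ R) →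
      |t - t'| < η → ‖x - x'‖ < η → |r - r'| < η → ‖p - p'‖ < η →
      (∀ i j, |X i j - X' i j| < η) →
      |F t x r p X - F t' x' r' p' X'| < δ)
    (u v : ℝ × EuclideanSpace ℝ (Fin n) → ℝ)
    (hub : ∃ C, ∀ p, |u p| ≤ C) (hvb : ∃ C, ∀ p, |v p| ≤ C)
    (husc : UpperSemicontinuousOn u (Set.Icc 0 T ×ˢ Set.univ))
    (hlsc : LowerSemicontinuousOn v (Set.Icc 0 T ×ˢ Set.univ))
    -- `u` is a viscosity subsolution of `∂ₜ - F = 0` on `(0,T]×ℝⁿ`: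
    (hsub : ∀ ψ : ℝ × EuclideanSpace ℝ (Fin n) → ℝ, ContDiff ℝ 2 ψ →
      ∀ t₀ ∈ Set.Ioc 0 T, ∀ x₀,
      IsLocalMaxOn (fun q => u q - ψ q) (Set.Ioc 0 T ×ˢ Set.univ) (t₀, x₀) →
      ptDeriv ψ (t₀, x₀) - F t₀ x₀ (u (t₀, x₀)) (pxGrad ψ (t₀, x₀)) (pxHess ψ (t₀, x₀)) ≤ 0)
    -- `v` is a viscosity supersolution of `∂ₜ - F = 0` on `(0,T]×ℝⁿ`:
    (hsuper : ∀ ψ : ℝ × EuclideanSpace ℝ (Fin n) → ℝ, ContDiff ℝ 2 ψ →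
      ∀ t₀ ∈ Set.Ioc 0 T, ∀ x₀,
      IsLocalMinOn (fun q => v q - ψ q) (Set.Ioc 0 T ×ˢ Set.univ) (t₀, x₀) →
      0 ≤ ptDeriv ψ (t₀, x₀) -
        F t₀ x₀ (v (t₀, x₀)) (pxGrad ψ (t₀, x₀)) (pxHess ψ (t₀, x₀)))
    (hu0 : UniformContinuous (fun x => u (0, x)))
    (hv0 : UniformContinuous (fun x => v (0, x)))
    (hinit : ∀ x, u (0, x) ≤ v (0, x)) :
    ∃ l : ℝ → ℝ, Tendsto l atTop (nhds 0) ∧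
      ∀ t ∈ Set.Icc 0 T, ∀ x y : EuclideanSpace ℝ (Fin n), ∀ α > (0:ℝ),
        u (t, x) - v (t, y) ≤ α / 2 * ‖x - y‖ ^ 2 + l α := by
  obtain ⟨Cu, hCu⟩ := hub
  obtain ⟨Cv, hCv⟩ := hvb
  exact stmt15_general ⟨hsub, hsuper, husc, hlsc, fun p => (hCu p).trans (le_max_left Cu Cv),
    fun p => (hCv p).trans (le_max_right Cu Cv)⟩ hT.le hγ hFproper hFstruct hFuc
    (exists_forall_sub_le_of_uniformContinuous hu0 hinit)
end
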